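/- arXiv:1502.03811 — 3 statements merged into one kernel-verified Lean document; each statement's English description precedes it below -/
import Mathlib

section
/- Let F₂ be the free group on two generators a and b. There exists a family (ρ_t)_{t ∈ [0,1]} of group homomorphisms ρ_t : F₂ → SL(2,ℝ) × SL(2,ℝ) with the following properties. (1) Continuity in t: for every γ ∈ F₂, the map t ↦ ρ_t(γ) is continuous on [0,1]. (2) ρ₀ is a quasi-isometric embedding: there exist constants c ≥ 1 and C ≥ 0 such that for every γ ∈ F₂, c⁻¹·ℓ(γ) − C ≤ μ((ρ₀(γ))₁) + μ((ρ₀(γ))₂) ≤ c·ℓ(γ) + C, where (ρ₀(γ))₁ and (ρ₀(γ))₂ denote the two components of ρ₀(γ). (3) For every irrational t ∈ [0,1], the image ρ_t(F₂) is dense in SL(2,ℝ) × SL(2,ℝ) (for the product of the matrix topologies). -/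
open Matrix

/-- The operator norm of a `2 × 2` real matrix acting on Euclidean `ℝ²`. -/
noncomputable def opNorm2 (M : Matrix (Fin 2) (Fin 2) ℝ) : ℝ :=
  ‖LinearMap.toContinuousLinearMap (Matrix.toEuclideanLin M)‖

/-- The Cartan projection `μ(g) = 2 log ‖g‖` of `SL(2,ℝ)`, identifying the closed positive
Weyl chamber with `ℝ≥0`. -/
noncomputable def mu2 (g : Matrix.SpecialLinearGroup (Fin 2) ℝ) : ℝ :=
  2 * Real.log (opNorm2 (g : Matrix (Fin 2) (Fin 2) ℝ))

/-- The word length of an element of the free group on two generators. -/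
def wordLength (γ : FreeGroup (Fin 2)) : ℕ :=
  (FreeGroup.toWord γ).length

/-!
Let `D = diag(eˢ, e⁻ˢ)` and let `F φ` be the companion matrix of trace `2 cos φ`. The family is
`ρ_t(a) = (F(α)², D)`, `ρ_t(b) = (D, F(β)²)` for angles `α(t)`, `β(t)` vanishing at `t = 0`.

At `t = 0` the matrix `F 0` is parabolic. Ping-pong for `D` and `F(0)²` shows that each `D^{±1}` in
a reduced word at least triples the squared length of a suitable vector, whereas the parabolic
letters do not shrink it. So one factor controls the number of letters `b`, the other one the
number of letters `a`, and together they control the word length.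

For irrational `t` one angle, say `α`, equals `2π / m` with `m` odd, and `β / π` is irrational. Then
`F(α)²` has order `m`, so `(1, D^m)` lies in the closure `H` of the image. Each projection of `H` is
dense, as it contains the hyperbolic `D` and an elliptic element conjugate to a rotation of infinite
order: `F(β)²` on one side, and on the other `F(α)⁻¹ D`, whose trace `2 cos α · e⁻ˢ` is
transcendental when `eˢ` is. Density of the second projection makes `{y | (1, y) ∈ H}` normal, and a
normal subgroup of `SL(2, ℝ)` containing `D^m` is everything.
-/

open Filter Topology Set Real
open scoped MatrixGroups

section FreeGroup

variable {α : Type*}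

theorem continuousOn_lift_apply {X G : Type*} [TopologicalSpace X] [Group G] [TopologicalSpace G]
    [IsTopologicalGroup G] {g : X → α → G} {S : Set X}
    (hg : ∀ i, ContinuousOn (fun t => g t i) S) (γ : FreeGroup α) :
    ContinuousOn (fun t => FreeGroup.lift (g t) γ) S := by
  induction γ using FreeGroup.induction_on with
  | C1 => simpa only [map_one] using continuousOn_const
  | of i => simpa only [FreeGroup.lift_apply_of] using hg i
  | inv_of i ih => simpa only [map_inv] using ih.fun_inv
  | mul x y hx hy => simpa only [map_mul] using hx.fun_mul hy

variable {G X : Type*} [Group G] [MulAction G X] {φ : FreeGroup α →* G}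
  {dom : α × Bool → Set X} {p₀ : X}

theorem smul_mem_of_isReduced_cons
    (hdom : ∀ x y : α × Bool, (y.1 = x.1 → y.2 = x.2) → ∀ p ∈ dom x,
      φ (FreeGroup.mk [x]) • p ∈ dom y)
    (hp₀ : ∀ x, p₀ ∈ dom x) (L : List (α × Bool)) (y : α × Bool)
    (hL : FreeGroup.IsReduced (y :: L)) : φ (FreeGroup.mk L) • p₀ ∈ dom y := by
  induction L generalizing y with
  | nil => simpa [← FreeGroup.one_eq_mk] using hp₀ y
  | cons x L ih =>
    rw [FreeGroup.isReduced_cons_cons] at hL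
    rw [← List.singleton_append, ← FreeGroup.mul_mk, map_mul, mul_smul]
    exact hdom x y hL.1 _ (ih x hL.2)

variable [DecidableEq α]

/-- The number `ℓ_i(γ)` of letters of the reduced word of `γ` that are the generator `i` or its
inverse. -/
def letterCount (i : α) (γ : FreeGroup α) : ℕ :=
  (γ.toWord.map Prod.fst).count i

theorem sum_letterCount [Fintype α] (γ : FreeGroup α) : ∑ i, letterCount i γ = γ.norm := by
  simpa [letterCount, FreeGroup.norm] using
    Multiset.sum_count_eq_card (s := Finset.univ) (m := (γ.toWord.map Prod.fst : Multiset α))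
      fun a _ => Finset.mem_univ a

theorem exists_le_mul_norm_of_subadditive [Finite α] (f : FreeGroup α → ℝ) (hone : f 1 ≤ 0)
    (hmul : ∀ x y, f (x * y) ≤ f x + f y) : ∃ C, 1 ≤ C ∧ ∀ γ, f γ ≤ C * γ.norm := by
  obtain ⟨C, hC⟩ := (Set.finite_range fun x : α × Bool => f (FreeGroup.mk [x])).bddAbove
  replace hC (x) : f (FreeGroup.mk [x]) ≤ max C 1 := (hC ⟨x, rfl⟩).trans (le_max_left C 1)
  have hword (L : List (α × Bool)) : f (FreeGroup.mk L) ≤ max C 1 * L.length := by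
    induction L with
    | nil => simpa [← FreeGroup.one_eq_mk] using hone
    | cons x L ih =>
      calc f (FreeGroup.mk (x :: L)) ≤ f (FreeGroup.mk [x]) + f (FreeGroup.mk L) := by
            simpa using hmul (FreeGroup.mk [x]) (FreeGroup.mk L)
        _ ≤ max C 1 + max C 1 * L.length := add_le_add (hC x) ih
        _ = max C 1 * (x :: L).length := by push_cast [List.length_cons]; ring
  exact ⟨max C 1, le_max_right C 1, fun γ => by
    simpa only [FreeGroup.mk_toWord] using! hword γ.toWord⟩

theorem pow_letterCount_mul_le
    (hdom : ∀ x y : α × Bool, (y.1 = x.1 → y.2 = x.2) → ∀ p ∈ dom x,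
      φ (FreeGroup.mk [x]) • p ∈ dom y)
    (hp₀ : ∀ x, p₀ ∈ dom x) {q : X → ℝ} {c : ℝ} (hc : 0 ≤ c) {i : α}
    (hq : ∀ x, ∀ p ∈ dom x, (if x.1 = i then c else 1) * q p ≤ q (φ (FreeGroup.mk [x]) • p))
    (γ : FreeGroup α) : c ^ letterCount i γ * q p₀ ≤ q (φ γ • p₀) := by
  have hword (L : List (α × Bool)) (hL : FreeGroup.IsReduced L) :
      c ^ (L.map Prod.fst).count i * q p₀ ≤ q (φ (FreeGroup.mk L) • p₀) := by
    induction L with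
    | nil => simp [← FreeGroup.one_eq_mk]
    | cons x L ih =>
      calc c ^ ((x :: L).map Prod.fst).count i * q p₀
          = (if x.1 = i then c else 1) * (c ^ (L.map Prod.fst).count i * q p₀) := by
            split_ifs with h <;> simp [h, pow_succ]; ring
        _ ≤ (if x.1 = i then c else 1) * q (φ (FreeGroup.mk L) • p₀) := by
            refine mul_le_mul_of_nonneg_left (ih (List.IsChain.of_cons hL)) ?_
            split_ifs <;> positivity
        _ ≤ q (φ (FreeGroup.mk (x :: L)) • p₀) := by
            rw [← List.singleton_append, ← FreeGroup.mul_mk, map_mul, mul_smul]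
            exact hq x _ (smul_mem_of_isReduced_cons hdom hp₀ L x hL)
  simpa only [FreeGroup.mk_toWord] using! hword γ.toWord FreeGroup.isReduced_toWord

end FreeGroup

section CartanProjection

open scoped Matrix.Norms.L2Operator

theorem opNorm2_eq_l2_opNorm (M : Matrix (Fin 2) (Fin 2) ℝ) : opNorm2 M = ‖M‖ :=
  (Matrix.l2_opNorm_def M).symm

theorem opNorm2_coe_pos (g : SL(2, ℝ)) : 0 < opNorm2 g := by
  rw [opNorm2_eq_l2_opNorm, norm_pos_iff]
  intro h
  simpa [h] using g.det_coe

theorem mu2_one : mu2 1 = 0 := by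
  simp [mu2, opNorm2_eq_l2_opNorm]

theorem mu2_mul_le (g h : SL(2, ℝ)) : mu2 (g * h) ≤ mu2 g + mu2 h := by
  have hmul : opNorm2 (g * h : SL(2, ℝ)) ≤ opNorm2 g * opNorm2 h := by
    simpa only [opNorm2_eq_l2_opNorm, Matrix.SpecialLinearGroup.coe_mul] using
      Matrix.l2_opNorm_mul _ _
  rw [mu2, mu2, mu2, ← mul_add, ← Real.log_mul (opNorm2_coe_pos g).ne' (opNorm2_coe_pos h).ne']
  gcongr
  exact opNorm2_coe_pos _

theorem dotProduct_mulVec_self_le (M : Matrix (Fin 2) (Fin 2) ℝ) (p : Fin 2 → ℝ) :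
    (M *ᵥ p) ⬝ᵥ (M *ᵥ p) ≤ opNorm2 M ^ 2 * (p ⬝ᵥ p) := by
  have hsq (v : Fin 2 → ℝ) : ‖WithLp.toLp 2 v‖ ^ 2 = v ⬝ᵥ v := by
    rw [EuclideanSpace.real_norm_sq_eq]
    simp only [dotProduct, pow_two]
  rw [← hsq, ← hsq, ← mul_pow, opNorm2_eq_l2_opNorm]
  gcongr
  exact Matrix.l2_opNorm_mulVec M (WithLp.toLp 2 p)

theorem le_mu2_of_pow_mul_le {g : SL(2, ℝ)} {p : Fin 2 → ℝ} (hp : p ≠ 0) {c : ℝ}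
    (hc : exp 1 ≤ c) {k : ℕ} (h : c ^ k * (p ⬝ᵥ p) ≤ (g • p) ⬝ᵥ (g • p)) : k ≤ mu2 g := by
  have hpos : 0 < p ⬝ᵥ p := by simpa using dotProduct_self_star_pos_iff.mpr hp
  have hexp : exp k ≤ opNorm2 g ^ 2 :=
    calc exp k = exp 1 ^ k := by rw [← exp_nat_mul, mul_one]
      _ ≤ c ^ k := by gcongr
      _ ≤ opNorm2 g ^ 2 := le_of_mul_le_mul_right (h.trans (dotProduct_mulVec_self_le g p)) hpos
  calc (k : ℝ) = log (exp k) := (log_exp _).symm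
    _ ≤ log (opNorm2 g ^ 2) := log_le_log (exp_pos _) hexp
    _ = mu2 g := by rw [log_pow, mu2, Nat.cast_ofNat]

end CartanProjection

section OneParameterFamilies

/-- The diagonal matrix `diag(eˢ, e⁻ˢ)`. -/
noncomputable def diagSL (s : ℝ) : SL(2, ℝ) :=
  Matrix.SpecialLinearGroup.diag2 (exp s) (exp_ne_zero s)

/-- The matrix `[[2 cos φ, -1], [1, 0]]` of trace `2 cos φ`, which is parabolic at `φ = 0` and
elliptic for small `φ ≠ 0`. -/
noncomputable def companionSL (φ : ℝ) : SL(2, ℝ) :=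
  ⟨!![2 * cos φ, -1; 1, 0], by simp⟩

theorem coe_companionSL (φ : ℝ) :
    (companionSL φ : Matrix (Fin 2) (Fin 2) ℝ) = !![2 * cos φ, -1; 1, 0] :=
  rfl

theorem continuous_companionSL : Continuous companionSL := by
  refine Continuous.subtype_mk (continuous_matrix fun i j => ?_) _
  fin_cases i <;> fin_cases j <;>
    simp only [Fin.zero_eta, Fin.mk_one, Fin.isValue, of_apply, cons_val', cons_val_zero,
      cons_val_one, cons_val_fin_one] <;>
    fun_prop

theorem coe_diagSL (s : ℝ) : (diagSL s : Matrix (Fin 2) (Fin 2) ℝ) = !![exp s, 0; 0, exp (-s)] := by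
  rw [diagSL, Matrix.SpecialLinearGroup.diag2_coe', exp_neg]

end OneParameterFamilies

section PingPong

theorem diagSL_smul (s : ℝ) (p : Fin 2 → ℝ) :
    diagSL s • p = ![exp s * p 0, exp (-s) * p 1] := by
  rw [Matrix.SpecialLinearGroup.smul_def, coe_diagSL]
  ext k
  fin_cases k <;> simp [Matrix.smul_eq_mulVec, Matrix.mulVec, dotProduct]

theorem companionSL_zero_sq_smul (p : Fin 2 → ℝ) :
    companionSL 0 ^ 2 • p = ![3 * p 0 - 2 * p 1, 2 * p 0 - p 1] := by
  have hcoe : (↑(companionSL 0 ^ 2) : Matrix (Fin 2) (Fin 2) ℝ) = !![3, -2; 2, -1] := by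
    rw [Matrix.SpecialLinearGroup.coe_pow, coe_companionSL, pow_two]
    norm_num
  rw [Matrix.SpecialLinearGroup.smul_def, hcoe]
  ext k
  fin_cases k <;> simp [Matrix.smul_eq_mulVec, Matrix.mulVec, dotProduct, sub_eq_add_neg]

/-- The identity (`true`) or the exchange of the two coordinates (`false`). The exchange conjugates
each generator of the limit representation to its inverse, which reduces the ping-pong argument to
the generators themselves. -/
def orient : Bool → (Fin 2 → ℝ) → Fin 2 → ℝ
  | true, p => p
  | false, p => ![p 1, p 0]

theorem orient_orient (b b' : Bool) (p : Fin 2 → ℝ) :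
    orient b (orient b' p) = orient (b == b') p := by
  ext k
  cases b <;> cases b' <;> fin_cases k <;> rfl

theorem orient_dotProduct_self (b : Bool) (p : Fin 2 → ℝ) :
    orient b p ⬝ᵥ orient b p = p ⬝ᵥ p := by
  cases b
  · simp [orient, dotProduct, add_comm]
  · rfl

/-- The cone on which the `k`-th generator acts in a ping-pong game where the `i`-th generator is
diagonal and the other one is `companionSL 0 ^ 2`. -/
def sourceCone (i k : Fin 2) : Set (Fin 2 → ℝ) :=
  if k = i then {p | p 1 ^ 2 ≤ 9 * p 0 ^ 2} else {p | 0 ≤ (p 0 - p 1) * (3 * p 0 - p 1)}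

/-- The cone into which the `k`-th generator sends `sourceCone i k`. -/
def targetCone (i k : Fin 2) : Set (Fin 2 → ℝ) :=
  if k = i then {p | 9 * p 1 ^ 2 ≤ p 0 ^ 2} else {p | 0 ≤ (p 0 - p 1) * (3 * p 1 - p 0)}

theorem orient_mem_sourceCone {i k l : Fin 2} {b : Bool} (hb : l = k → b = true) {p : Fin 2 → ℝ}
    (hp : p ∈ targetCone i k) : orient b p ∈ sourceCone i l := by
  by_cases hk : k = i <;> by_cases hl : l = i <;> cases b <;>
    simp only [targetCone, sourceCone, hk, hl, if_true, if_false, mem_ofPred_eq, orient,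
      Matrix.cons_val_zero, Matrix.cons_val_one] at hp ⊢
  · simp_all
  · nlinarith
  · nlinarith [sq_nonneg (p 0 - 3 * p 1), sq_nonneg (p 0 + 3 * p 1), sq_nonneg (p 0)]
  · nlinarith [sq_nonneg (p 0 - 3 * p 1), sq_nonneg (p 0 + 3 * p 1), sq_nonneg (p 0)]
  · nlinarith [sq_nonneg (p 0 - p 1), sq_nonneg (p 0 - 3 * p 1)]
  · nlinarith [sq_nonneg (p 0 - p 1), sq_nonneg (p 0 - 3 * p 1)]
  · have : l = k := by omega
    simp_all
  · nlinarith [sq_nonneg (p 0 - p 1)]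

section Generators

variable {g : Fin 2 → SL(2, ℝ)} {s : ℝ} {i : Fin 2}

theorem inv_smul_eq_orient (hdiag : g i = diagSL s) (hpar : ∀ j ≠ i, g j = companionSL 0 ^ 2)
    (k : Fin 2) (p : Fin 2 → ℝ) : (g k)⁻¹ • p = orient false (g k • orient false p) := by
  rw [inv_smul_eq_iff]
  by_cases hk : k = i
  · subst hk
    ext l
    fin_cases l <;> simp [hdiag, diagSL_smul, orient, ← mul_assoc, ← exp_add]
  · ext l
    fin_cases l <;> simp [hpar k hk, companionSL_zero_sq_smul, orient] <;> ring

theorem lift_mk_singleton_smul (hdiag : g i = diagSL s)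
    (hpar : ∀ j ≠ i, g j = companionSL 0 ^ 2) (x : Fin 2 × Bool) (p : Fin 2 → ℝ) :
    FreeGroup.lift g (FreeGroup.mk [x]) • p = orient x.2 (g x.1 • orient x.2 p) := by
  obtain ⟨k, b⟩ := x
  cases b
  · simpa using inv_smul_eq_orient hdiag hpar k p
  · simp [orient]

theorem smul_mem_targetCone (hdiag : g i = diagSL s) (hpar : ∀ j ≠ i, g j = companionSL 0 ^ 2)
    (hs : 6 ≤ exp s) {k : Fin 2} {p : Fin 2 → ℝ} (hp : p ∈ sourceCone i k) :
    g k • p ∈ targetCone i k := by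
  by_cases hk : k = i
  · subst hk
    simp only [sourceCone, targetCone, if_true, mem_ofPred_eq, hdiag, diagSL_smul] at hp ⊢
    have hexp_neg : exp (-s) ≤ 1 / 6 := by
      rw [exp_neg, inv_eq_one_div]
      gcongr
    calc 9 * (exp (-s) * p 1) ^ 2 ≤ 9 * ((1 / 6) ^ 2 * (9 * p 0 ^ 2)) := by
          rw [mul_pow]
          gcongr
      _ ≤ 6 ^ 2 * p 0 ^ 2 := by nlinarith [sq_nonneg (p 0)]
      _ ≤ (exp s * p 0) ^ 2 := by
          rw [mul_pow]
          gcongr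
  · simp only [sourceCone, targetCone, hk, if_false, mem_ofPred_eq, hpar k hk,
      companionSL_zero_sq_smul, Matrix.cons_val_zero, Matrix.cons_val_one] at hp ⊢
    linarith

theorem mul_dotProduct_self_le (hdiag : g i = diagSL s)
    (hpar : ∀ j ≠ i, g j = companionSL 0 ^ 2) (hs : 6 ≤ exp s) {k : Fin 2} {p : Fin 2 → ℝ}
    (hp : p ∈ sourceCone i k) :
    (if k = i then 3 else 1) * (p ⬝ᵥ p) ≤ (g k • p) ⬝ᵥ (g k • p) := by
  by_cases hk : k = i
  · subst hk
    simp only [sourceCone, if_true, mem_ofPred_eq, hdiag, diagSL_smul] at hp ⊢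
    have h36 : 36 ≤ exp s ^ 2 := by nlinarith
    simp only [dotProduct, Fin.sum_univ_two, Matrix.cons_val_zero, Matrix.cons_val_one]
    nlinarith [sq_nonneg (exp (-s) * p 1), mul_le_mul_of_nonneg_right h36 (sq_nonneg (p 0))]
  · simp only [sourceCone, hk, if_false, mem_ofPred_eq, hpar k hk,
      companionSL_zero_sq_smul, dotProduct, Fin.sum_univ_two, Matrix.cons_val_zero,
      Matrix.cons_val_one] at hp ⊢
    linarith

theorem letterCount_le_mu2_lift (hdiag : g i = diagSL s)
    (hpar : ∀ j ≠ i, g j = companionSL 0 ^ 2) (hs : 6 ≤ exp s) (γ : FreeGroup (Fin 2)) :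
    letterCount i γ ≤ mu2 (FreeGroup.lift g γ) := by
  let p₀ : Fin 2 → ℝ := ![1, -1]
  have hp₀ (x : Fin 2 × Bool) : orient x.2 p₀ ∈ sourceCone i x.1 := by
    obtain ⟨k, b⟩ := x
    by_cases hk : k = i <;> cases b <;> norm_num [p₀, sourceCone, orient, hk]
  refine le_mu2_of_pow_mul_le (p := p₀) (by simp [p₀]) exp_one_lt_three.le
    (pow_letterCount_mul_le (dom := fun x => orient x.2 ⁻¹' sourceCone i x.1)
      (q := fun p => p ⬝ᵥ p) ?_ hp₀ zero_le_three ?_ γ)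
  · intro x y hxy p hp
    rw [mem_preimage, lift_mk_singleton_smul hdiag hpar, orient_orient]
    exact orient_mem_sourceCone (by simpa using hxy) (smul_mem_targetCone hdiag hpar hs hp)
  · intro x p hp
    simpa only [lift_mk_singleton_smul hdiag hpar, orient_dotProduct_self] using
      mul_dotProduct_self_le hdiag hpar hs hp

end Generators

end PingPong

section ClosedSubgroups

variable {G G' : Type*} [Group G] [TopologicalSpace G] [Group G'] [TopologicalSpace G']
  {H : Subgroup (G × G')}

theorem normal_comap_inr_of_dense_map_snd [IsTopologicalGroup G'] (hH : IsClosed (H : Set (G × G')))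
    (hdense : Dense (H.map (MonoidHom.snd G G') : Set G')) :
    (H.comap (MonoidHom.inr G G')).Normal := by
  refine ⟨fun y hy x => ?_⟩
  have hclosed : IsClosed {x | ((1, x * y * x⁻¹) : G × G') ∈ H} := hH.preimage (by fun_prop)
  refine hclosed.closure_subset_iff.mpr ?_ (hdense x)
  rintro _ ⟨h, hh, rfl⟩
  have hconj := H.mul_mem (H.mul_mem hh hy) (H.inv_mem hh)
  simpa [Prod.mul_def] using! hconj

theorem eq_top_of_comap_inr_eq_top (hH : IsClosed (H : Set (G × G')))
    (hdense : Dense (H.map (MonoidHom.fst G G') : Set G))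
    (htop : H.comap (MonoidHom.inr G G') = ⊤) : H = ⊤ := by
  have hinr (y : G') : ((1, y) : G × G') ∈ H := by
    have : y ∈ H.comap (MonoidHom.inr G G') := htop ▸ Subgroup.mem_top y
    exact this
  have hinl (x : G) : ((x, 1) : G × G') ∈ H := by
    have hclosed : IsClosed {x | ((x, 1) : G × G') ∈ H} := hH.preimage (by fun_prop)
    refine hclosed.closure_subset_iff.mpr ?_ (hdense x)
    rintro _ ⟨h, hh, rfl⟩
    simpa [Prod.mul_def] using! H.mul_mem hh (hinr h.2⁻¹)
  exact (Subgroup.eq_top_iff' H).mpr fun p => by simpa using H.mul_mem (hinl p.1) (hinr p.2)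

theorem dense_of_topologicalClosure_eq_top [IsTopologicalGroup G] {Γ : Subgroup G}
    (h : Γ.topologicalClosure = ⊤) : Dense (Γ : Set G) := by
  rw [dense_iff_closure_eq, ← Subgroup.topologicalClosure_coe, h, Subgroup.coe_top]

end ClosedSubgroups

section NormalSubgroups

variable {F : Type*} [Field F]

theorem eq_top_of_normal_of_diag2_mem {N : Subgroup SL(2, F)} (hN : N.Normal) {a : F} (ha : a ≠ 0)
    (hsq : a ^ 2 ≠ 1) (hmem : Matrix.SpecialLinearGroup.diag2 a ha ∈ N) : N = ⊤ := by
  have hsub : a ^ 2 - 1 ≠ 0 := sub_ne_zero.mpr hsq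
  have hupper (h : (0 : Fin 2) ≠ 1) (c : F) :
      Matrix.SpecialLinearGroup.transvection h c ∈ N := by
    have hcomm := Matrix.commutator_diag2_transvection a ha (c / (a ^ 2 - 1)) c
      (div_mul_cancel₀ c hsub).symm
    rw [← hcomm, commutatorElement_def, mul_assoc, mul_assoc]
    exact N.mul_mem hmem (by simpa only [mul_assoc] using hN.conj_mem _ (N.inv_mem hmem) _)
  have hlower (h : (1 : Fin 2) ≠ 0) (c : F) :
      Matrix.SpecialLinearGroup.transvection h c ∈ N := by
    obtain ⟨w, hw⟩ : ∃ w : SL(2, F), (w : Matrix (Fin 2) (Fin 2) F) = !![0, -1; 1, 0] :=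
      ⟨⟨!![0, -1; 1, 0], by simp⟩, rfl⟩
    have hconj : Matrix.SpecialLinearGroup.transvection h c =
        w * Matrix.SpecialLinearGroup.transvection h.symm (-c) * w⁻¹ := by
      rw [eq_mul_inv_iff_mul_eq]
      ext i j
      rw [Matrix.SpecialLinearGroup.coe_mul, Matrix.SpecialLinearGroup.coe_mul, hw]
      fin_cases i <;> fin_cases j <;>
        simp [Matrix.SpecialLinearGroup.transvection_coe, Matrix.mul_apply]
    rw [hconj]
    exact hN.conj_mem _ (hupper _ _) _
  refine (Subgroup.eq_top_iff' N).mpr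
    (Matrix.SL2.transvection_induction (· ∈ N) (fun i j hij c => ?_) fun _ _ => N.mul_mem)
  fin_cases i <;> fin_cases j
  · exact absurd rfl hij
  · exact hupper hij c
  · exact hlower hij c
  · exact absurd rfl hij

end NormalSubgroups

section CartanDecomposition

/-- The rotation of angle `φ`. -/
noncomputable def rotSL (φ : ℝ) : SL(2, ℝ) :=
  ⟨!![cos φ, -sin φ; sin φ, cos φ], by simp [← pow_two]⟩

theorem coe_rotSL (φ : ℝ) :
    (rotSL φ : Matrix (Fin 2) (Fin 2) ℝ) = !![cos φ, -sin φ; sin φ, cos φ] :=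
  rfl

theorem continuous_rotSL : Continuous rotSL := by
  refine Continuous.subtype_mk (continuous_matrix fun i j => ?_) _
  fin_cases i <;> fin_cases j <;>
    simp only [Fin.zero_eta, Fin.mk_one, Fin.isValue, of_apply, cons_val', cons_val_zero,
      cons_val_one, cons_val_fin_one] <;>
    fun_prop

theorem rotSL_zero : rotSL 0 = 1 := by
  ext i j
  fin_cases i <;> fin_cases j <;> simp [coe_rotSL]

theorem rotSL_add (φ ψ : ℝ) : rotSL (φ + ψ) = rotSL φ * rotSL ψ := by
  ext i j
  fin_cases i <;> fin_cases j <;> simp [coe_rotSL, cos_add, sin_add] <;> ring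

theorem diagSL_zero : diagSL 0 = 1 := by
  ext i j
  fin_cases i <;> fin_cases j <;> simp [coe_diagSL]

theorem diagSL_add (s t : ℝ) : diagSL (s + t) = diagSL s * diagSL t := by
  ext i j
  fin_cases i <;> fin_cases j <;> simp [coe_diagSL, exp_add, mul_comm]

theorem rotSL_neg (φ : ℝ) : rotSL (-φ) = (rotSL φ)⁻¹ :=
  eq_inv_of_mul_eq_one_left (by rw [← rotSL_add, neg_add_cancel, rotSL_zero])

theorem rotSL_natCast_mul (n : ℕ) (φ : ℝ) : rotSL (n * φ) = rotSL φ ^ n := by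
  induction n with
  | zero => simp [rotSL_zero]
  | succ n ih => rw [Nat.cast_succ, add_one_mul, rotSL_add, ih, pow_succ]

theorem diagSL_natCast_mul (n : ℕ) (s : ℝ) : diagSL (n * s) = diagSL s ^ n := by
  induction n with
  | zero => simp [diagSL_zero]
  | succ n ih => rw [Nat.cast_succ, add_one_mul, diagSL_add, ih, pow_succ]

theorem coe_rotSL_mul_diagSL_mul_rotSL (φ x ψ : ℝ) :
    (rotSL φ * diagSL x * rotSL ψ : Matrix (Fin 2) (Fin 2) ℝ) =
      !![cosh x * cos (φ + ψ) + sinh x * cos (φ - ψ), sinh x * sin (φ - ψ) - cosh x * sin (φ + ψ);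
        cosh x * sin (φ + ψ) + sinh x * sin (φ - ψ),
        cosh x * cos (φ + ψ) - sinh x * cos (φ - ψ)] := by
  rw [coe_rotSL, coe_rotSL, coe_diagSL, cosh_eq, sinh_eq]
  ext i j
  fin_cases i <;> fin_cases j <;> simp [cos_add, cos_sub, sin_add, sin_sub] <;> ring

theorem coe_diagSL_mul_rotSL_mul_diagSL (x φ : ℝ) :
    (diagSL x * rotSL φ * diagSL x : Matrix (Fin 2) (Fin 2) ℝ) =
      !![cos φ * exp (2 * x), -sin φ; sin φ, cos φ * exp (-(2 * x))] := by
  have hexp : exp x * exp (-x) = 1 := by rw [← exp_add, add_neg_cancel, exp_zero]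
  rw [coe_rotSL, coe_diagSL, two_mul, neg_add, exp_add, exp_add]
  ext i j
  fin_cases i <;> fin_cases j <;> simp <;> grind

theorem exists_eq_rotSL_mul_diagSL_mul_rotSL {g : SL(2, ℝ)} {x : ℝ} (hx : 0 ≤ x)
    (hg : (g 0 0 - g 1 1) ^ 2 + (g 0 1 + g 1 0) ^ 2 = (2 * sinh x) ^ 2) :
    ∃ φ ψ, g = rotSL φ * diagSL x * rotSL ψ := by
  have hdet : g 0 0 * g 1 1 - g 0 1 * g 1 0 = 1 := by rw [← det_fin_two, g.det_coe]
  let p : ℂ := ⟨(g 0 0 + g 1 1) / 2, (g 1 0 - g 0 1) / 2⟩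
  let q : ℂ := ⟨(g 0 0 - g 1 1) / 2, (g 0 1 + g 1 0) / 2⟩
  have hp : ‖p‖ = cosh x := by
    rw [← sq_eq_sq₀ (norm_nonneg _) (cosh_pos x).le, Complex.sq_norm, Complex.normSq_mk, cosh_sq]
    linarith
  have hq : ‖q‖ = sinh x := by
    rw [← sq_eq_sq₀ (norm_nonneg _) (sinh_nonneg_iff.mpr hx), Complex.sq_norm, Complex.normSq_mk]
    linarith
  have hp_re := Complex.norm_mul_cos_arg p
  have hp_im := Complex.norm_mul_sin_arg p
  have hq_re := Complex.norm_mul_cos_arg q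
  have hq_im := Complex.norm_mul_sin_arg q
  rw [hp] at hp_re hp_im
  rw [hq] at hq_re hq_im
  refine ⟨(p.arg + q.arg) / 2, (p.arg - q.arg) / 2, Subtype.ext ?_⟩
  refine .trans ?_ (coe_rotSL_mul_diagSL_mul_rotSL _ _ _).symm
  rw [show (p.arg + q.arg) / 2 + (p.arg - q.arg) / 2 = p.arg by ring,
    show (p.arg + q.arg) / 2 - (p.arg - q.arg) / 2 = q.arg by ring, hp_re, hp_im, hq_re, hq_im]
  ext i j
  fin_cases i <;> fin_cases j <;> simp [p, q] <;> ring

end CartanDecomposition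

section Rotations

variable {Γ : Subgroup SL(2, ℝ)}

theorem diagSL_mem_of_eq (hrot : ∀ φ, rotSL φ ∈ Γ) {g : SL(2, ℝ)} (hg : g ∈ Γ) {x : ℝ}
    (hx : 0 ≤ x) (h : (g 0 0 - g 1 1) ^ 2 + (g 0 1 + g 1 0) ^ 2 = (2 * sinh x) ^ 2) :
    diagSL x ∈ Γ := by
  obtain ⟨φ, ψ, rfl⟩ := exists_eq_rotSL_mul_diagSL_mul_rotSL hx h
  rwa [Γ.mul_mem_cancel_right (hrot ψ), Γ.mul_mem_cancel_left (hrot φ)] at hg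

theorem diagSL_mem_of_le (hrot : ∀ φ, rotSL φ ∈ Γ) {x y : ℝ} (hx : diagSL x ∈ Γ) (hy : 0 ≤ y)
    (hyx : y ≤ 2 * x) : diagSL y ∈ Γ := by
  obtain ⟨φ, hφ⟩ : ∃ φ, cos φ * sinh (2 * x) = sinh y := by
    refine ⟨arccos (sinh y / sinh (2 * x)), ?_⟩
    have hsinh_y : 0 ≤ sinh y := sinh_nonneg_iff.mpr hy
    have hsinh : sinh y ≤ sinh (2 * x) := sinh_le_sinh.mpr hyx
    have hquot : 0 ≤ sinh y / sinh (2 * x) := div_nonneg hsinh_y (hsinh_y.trans hsinh)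
    rw [cos_arccos (by linarith) (div_le_one_of_le₀ hsinh (hsinh_y.trans hsinh))]
    exact div_mul_cancel_of_imp fun h => le_antisymm (h ▸ hsinh) hsinh_y
  refine diagSL_mem_of_eq hrot (Γ.mul_mem (Γ.mul_mem hx (hrot φ)) hx) hy ?_
  rw [← hφ, sinh_eq]
  refine .trans (congrArg (fun M : Matrix (Fin 2) (Fin 2) ℝ =>
    (M 0 0 - M 1 1) ^ 2 + (M 0 1 + M 1 0) ^ 2) (coe_diagSL_mul_rotSL_mul_diagSL _ _)) ?_
  simp
  ring

theorem diagSL_mem (hrot : ∀ φ, rotSL φ ∈ Γ) {x : ℝ} (hx : 0 < x) (hmem : diagSL x ∈ Γ) {y : ℝ}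
    (hy : 0 ≤ y) : diagSL y ∈ Γ := by
  obtain ⟨n, hn⟩ := exists_nat_gt (y / x)
  have hn₀ : (0 : ℝ) < n := (by positivity : 0 ≤ y / x).trans_lt hn
  rw [← mul_div_cancel₀ y hn₀.ne', diagSL_natCast_mul]
  refine Γ.pow_mem (diagSL_mem_of_le hrot hmem (by positivity) ?_) n
  rw [div_le_iff₀ hn₀]
  rw [div_lt_iff₀ hx] at hn
  nlinarith

theorem exists_sq_add_sq_eq_two_mul_sinh_sq (a b : ℝ) :
    ∃ x, 0 ≤ x ∧ a ^ 2 + b ^ 2 = (2 * sinh x) ^ 2 := by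
  refine ⟨arsinh (√(a ^ 2 + b ^ 2) / 2), arsinh_nonneg_iff.mpr (by positivity), ?_⟩
  rw [sinh_arsinh, mul_div_cancel₀ _ two_ne_zero, sq_sqrt (by positivity)]

theorem eq_top_of_rotSL_mem_of_isHyperbolic (hrot : ∀ φ, rotSL φ ∈ Γ) {g : SL(2, ℝ)} (hg : g ∈ Γ)
    (hyp : (g : Matrix (Fin 2) (Fin 2) ℝ).IsHyperbolic) : Γ = ⊤ := by
  obtain ⟨x, hx, hgx⟩ := exists_sq_add_sq_eq_two_mul_sinh_sq (g 0 0 - g 1 1) (g 0 1 + g 1 0)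
  have hx₀ : x ≠ 0 := by
    rintro rfl
    rw [Matrix.IsHyperbolic, discr_fin_two, trace_fin_two, det_fin_two] at hyp
    rw [sinh_zero] at hgx
    nlinarith [sq_nonneg (g 0 0 - g 1 1), sq_nonneg (g 0 1 - g 1 0)]
  have hdiag {y : ℝ} : 0 ≤ y → diagSL y ∈ Γ :=
    diagSL_mem hrot (hx.lt_of_ne' hx₀) (diagSL_mem_of_eq hrot hg hx hgx)
  refine (Subgroup.eq_top_iff' Γ).mpr fun h => ?_
  obtain ⟨y, hy, hhy⟩ := exists_sq_add_sq_eq_two_mul_sinh_sq (h 0 0 - h 1 1) (h 0 1 + h 1 0)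
  obtain ⟨φ, ψ, rfl⟩ := exists_eq_rotSL_mul_diagSL_mul_rotSL hy hhy
  exact Γ.mul_mem (Γ.mul_mem (hrot φ) (hdiag hy)) (hrot ψ)

end Rotations

section EllipticElements

variable {Γ : Subgroup SL(2, ℝ)}

theorem rotSL_two_pi : rotSL (2 * π) = 1 := by
  ext i j
  fin_cases i <;> fin_cases j <;> simp [coe_rotSL]

theorem rotSL_mem_of_irrational (hΓ : IsClosed (Γ : Set SL(2, ℝ))) {ψ : ℝ}
    (hψ : Irrational (ψ / π)) (hmem : rotSL ψ ∈ Γ) (φ : ℝ) : rotSL φ ∈ Γ := by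
  let angles : AddSubgroup ℝ := (Subgroup.toAddSubgroup Γ).comap
    (AddMonoidHom.mk' (fun φ => Additive.ofMul (rotSL φ)) rotSL_add)
  have hgen : AddSubgroup.closure {ψ, 2 * π} ≤ angles := by
    refine (AddSubgroup.closure_le _).mpr (pair_subset hmem ?_)
    change rotSL (2 * π) ∈ Γ
    exact rotSL_two_pi ▸ Γ.one_mem
  have hdense : Dense (AddSubgroup.closure {ψ, 2 * π} : Set ℝ) := by
    rw [dense_addSubgroupClosure_pair_iff, mul_comm, ← div_div]
    exact mod_cast hψ.div_natCast two_ne_zero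
  have hclosed : IsClosed (angles : Set ℝ) := hΓ.preimage continuous_rotSL
  exact hclosed.closure_subset_iff.mpr hgen (hdense φ)

theorem exists_eq_rotSL {g : SL(2, ℝ)} (hdiag : g 0 0 = g 1 1) (hoff : g 0 1 = -g 1 0) :
    ∃ ψ, g = rotSL ψ := by
  have hdet : g 0 0 * g 1 1 - g 0 1 * g 1 0 = 1 := by rw [← det_fin_two, g.det_coe]
  let p : ℂ := ⟨g 0 0, g 1 0⟩
  have hp : ‖p‖ = 1 := by
    rw [← sq_eq_sq₀ (norm_nonneg _) zero_le_one, Complex.sq_norm, Complex.normSq_mk]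
    linear_combination hdet + g 0 0 * hdiag + g 1 0 * hoff
  have hcos : cos p.arg = g 0 0 := by simpa only [hp, one_mul] using Complex.norm_mul_cos_arg p
  have hsin : sin p.arg = g 1 0 := by simpa only [hp, one_mul] using Complex.norm_mul_sin_arg p
  refine ⟨p.arg, Subtype.ext ?_⟩
  rw [coe_rotSL, hcos, hsin, eta_fin_two (g : Matrix (Fin 2) (Fin 2) ℝ), hoff, ← hdiag]
  simp

-- An elliptic element fixes a point of the upper half-plane, and the stabilizer of `i` is `SO(2)`.
theorem exists_eq_conj_rotSL_of_isElliptic {g : SL(2, ℝ)}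
    (hg : (g : Matrix (Fin 2) (Fin 2) ℝ).IsElliptic) : ∃ P ψ, g = P * rotSL ψ * P⁻¹ := by
  let z : UpperHalfPlane := UpperHalfPlane.fixedPt (g : GL (Fin 2) ℝ) hg
  have hfix : g • z = z :=
    (UpperHalfPlane.gl_smul_eq_self_iff_eq_fixedPt (g := (g : GL (Fin 2) ℝ)) (by simp) hg).mpr rfl
  let P : SL(2, ℝ) := z.toSL2R
  have hI : (P⁻¹ * g * P) • UpperHalfPlane.I = UpperHalfPlane.I := by
    rw [mul_smul, mul_smul, inv_smul_eq_iff, UpperHalfPlane.toSL2R_smul_I, hfix]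
  obtain ⟨hdiag, hoff⟩ := (UpperHalfPlane.gl_smul_I_eq_I_iff_of_pos
    (g := ((P⁻¹ * g * P : SL(2, ℝ)) : GL (Fin 2) ℝ)) (by simp)).mp hI
  obtain ⟨ψ, hψ⟩ := exists_eq_rotSL (g := P⁻¹ * g * P) hdiag hoff
  exact ⟨P, ψ, by rw [← hψ]; group⟩

theorem trace_coe_conj (P g : SL(2, ℝ)) :
    trace ((P * g * P⁻¹ : SL(2, ℝ)) : Matrix (Fin 2) (Fin 2) ℝ) =
      trace (g : Matrix (Fin 2) (Fin 2) ℝ) := by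
  rw [Matrix.SpecialLinearGroup.coe_mul, trace_mul_comm, ← Matrix.SpecialLinearGroup.coe_mul,
    inv_mul_cancel_left]

theorem trace_rotSL (φ : ℝ) : trace (rotSL φ : Matrix (Fin 2) (Fin 2) ℝ) = 2 * cos φ := by
  rw [coe_rotSL, trace_fin_two_of, two_mul]

theorem isHyperbolic_coe_iff (g : SL(2, ℝ)) : (g : Matrix (Fin 2) (Fin 2) ℝ).IsHyperbolic ↔
    2 < |trace (g : Matrix (Fin 2) (Fin 2) ℝ)| := by
  rw [Matrix.IsHyperbolic, discr_fin_two, g.det_coe, sub_pos, ← abs_two, ← sq_lt_sq]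
  norm_num

theorem isElliptic_coe_iff (g : SL(2, ℝ)) : (g : Matrix (Fin 2) (Fin 2) ℝ).IsElliptic ↔
    |trace (g : Matrix (Fin 2) (Fin 2) ℝ)| < 2 := by
  rw [Matrix.IsElliptic, discr_fin_two, g.det_coe, sub_neg, ← abs_two, ← sq_lt_sq]
  norm_num

theorem eq_top_of_isElliptic_of_isHyperbolic (hΓ : IsClosed (Γ : Set SL(2, ℝ)))
    {g : SL(2, ℝ)} (hg : g ∈ Γ) (hell : (g : Matrix (Fin 2) (Fin 2) ℝ).IsElliptic)
    (htr : ∀ r : ℚ, trace (g : Matrix (Fin 2) (Fin 2) ℝ) ≠ 2 * cos (r * π))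
    {h : SL(2, ℝ)} (hh : h ∈ Γ) (hyp : (h : Matrix (Fin 2) (Fin 2) ℝ).IsHyperbolic) : Γ = ⊤ := by
  obtain ⟨P, ψ, rfl⟩ := exists_eq_conj_rotSL_of_isElliptic hell
  have hψ : Irrational (ψ / π) := by
    rintro ⟨r, hr⟩
    refine htr r ?_
    rw [trace_coe_conj, trace_rotSL, hr, div_mul_cancel₀ _ pi_ne_zero]
  obtain ⟨h, rfl⟩ := (MulAut.conj P).surjective h
  rw [MulAut.conj_apply] at hh hyp
  have hclosed : IsClosed (Γ.comap (MulAut.conj P).toMonoidHom : Set SL(2, ℝ)) :=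
    hΓ.preimage ((continuous_const_mul P).mul_const P⁻¹)
  have hyp' : (h : Matrix (Fin 2) (Fin 2) ℝ).IsHyperbolic := by
    rwa [isHyperbolic_coe_iff, trace_coe_conj, ← isHyperbolic_coe_iff] at hyp
  have htop : Γ.comap (MulAut.conj P).toMonoidHom = ⊤ :=
    eq_top_of_rotSL_mem_of_isHyperbolic (rotSL_mem_of_irrational hclosed hψ hg) hh hyp'
  exact Subgroup.comap_injective (MulAut.conj P).surjective htop

theorem dense_of_isElliptic_of_isHyperbolic {g : SL(2, ℝ)} (hg : g ∈ Γ)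
    (hell : (g : Matrix (Fin 2) (Fin 2) ℝ).IsElliptic)
    (htr : ∀ r : ℚ, trace (g : Matrix (Fin 2) (Fin 2) ℝ) ≠ 2 * cos (r * π))
    {h : SL(2, ℝ)} (hh : h ∈ Γ) (hyp : (h : Matrix (Fin 2) (Fin 2) ℝ).IsHyperbolic) :
    Dense (Γ : Set SL(2, ℝ)) :=
  dense_of_topologicalClosure_eq_top <|
    eq_top_of_isElliptic_of_isHyperbolic Γ.isClosed_topologicalClosure
      (Γ.le_topologicalClosure hg) hell htr (Γ.le_topologicalClosure hh) hyp

theorem rotSL_eq_or_eq_inv_of_cos_eq {φ ψ : ℝ} (h : cos φ = cos ψ) :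
    rotSL φ = rotSL ψ ∨ rotSL φ = (rotSL ψ)⁻¹ := by
  have hsq : sin φ ^ 2 = sin ψ ^ 2 := by rw [sin_sq, sin_sq, h]
  rw [← rotSL_neg]
  refine (sq_eq_sq_iff_eq_or_eq_neg.mp hsq).imp (fun hsin => ?_) fun hsin => ?_ <;>
    exact Subtype.ext (by simp [coe_rotSL, h, hsin])

theorem pow_eq_one_of_trace_eq {g : SL(2, ℝ)} {φ : ℝ} {n : ℕ}
    (hell : (g : Matrix (Fin 2) (Fin 2) ℝ).IsElliptic)
    (htr : trace (g : Matrix (Fin 2) (Fin 2) ℝ) = 2 * cos φ) (hn : rotSL φ ^ n = 1) :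
    g ^ n = 1 := by
  obtain ⟨P, ψ, rfl⟩ := exists_eq_conj_rotSL_of_isElliptic hell
  rw [trace_coe_conj, trace_rotSL, mul_right_inj' two_ne_zero] at htr
  rw [conj_pow, conj_eq_one_iff]
  rcases rotSL_eq_or_eq_inv_of_cos_eq htr with h | h
  · rw [h, hn]
  · rw [h, inv_pow, hn, inv_one]

end EllipticElements

section GeneratorPairs

variable {Γ : Subgroup SL(2, ℝ)}

theorem abs_cos_lt_one_iff {x : ℝ} : |cos x| < 1 ↔ sin x ≠ 0 := by
  rw [← sq_lt_one_iff_abs_lt_one, cos_sq', sub_lt_self_iff, sq_pos_iff]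

theorem sin_ne_zero_of_irrational {x : ℝ} (hx : Irrational (x / π)) : sin x ≠ 0 := by
  refine sin_ne_zero_iff.mpr fun n hn => hx.ne_int n ?_
  rw [← hn, mul_div_cancel_right₀ _ pi_ne_zero]

theorem cos_ne_cos_rat_mul_pi {x : ℝ} (hx : Irrational (x / π)) (r : ℚ) : cos x ≠ cos (r * π) := by
  intro h
  obtain ⟨k, hk | hk⟩ := cos_eq_cos_iff.mp h.symm
  · refine hx ⟨2 * k + r, ?_⟩
    rw [hk]
    field_simp
    push_cast
    ring
  · refine hx ⟨2 * k - r, ?_⟩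
    rw [hk]
    field_simp
    push_cast
    ring

theorem exists_lt_exp_transcendental (x : ℝ) : ∃ s, x < exp s ∧ Transcendental ℚ (exp s) := by
  obtain ⟨y, hy, hxy⟩ := ((Algebraic.countable ℚ ℝ).dense_compl ℝ).exists_gt (max x 0)
  obtain ⟨hx, hpos⟩ := max_lt_iff.mp hxy
  exact ⟨log y, by rwa [exp_log hpos], by rwa [exp_log hpos]⟩

theorem isHyperbolic_diagSL {s : ℝ} (hs : s ≠ 0) :
    (diagSL s : Matrix (Fin 2) (Fin 2) ℝ).IsHyperbolic := by
  rw [isHyperbolic_coe_iff, coe_diagSL, trace_fin_two_of]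
  have hcosh := one_lt_cosh.mpr hs
  rw [cosh_eq] at hcosh
  exact lt_abs.mpr (.inl (by linarith))

theorem trace_companionSL (φ : ℝ) :
    trace (companionSL φ : Matrix (Fin 2) (Fin 2) ℝ) = 2 * cos φ := by
  rw [coe_companionSL, trace_fin_two_of, add_zero]

theorem isElliptic_companionSL {φ : ℝ} (hφ : sin φ ≠ 0) :
    (companionSL φ : Matrix (Fin 2) (Fin 2) ℝ).IsElliptic := by
  rw [isElliptic_coe_iff, trace_companionSL, abs_mul, abs_two]
  linarith [abs_cos_lt_one_iff.mpr hφ]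

theorem trace_companionSL_sq (φ : ℝ) :
    trace ((companionSL φ ^ 2 : SL(2, ℝ)) : Matrix (Fin 2) (Fin 2) ℝ) = 2 * cos (2 * φ) := by
  rw [Matrix.SpecialLinearGroup.coe_pow, coe_companionSL, pow_two, cos_two_mul]
  simp [trace_fin_two]
  ring

theorem trace_companionSL_inv_mul_diagSL (φ s : ℝ) :
    trace (((companionSL φ)⁻¹ * diagSL s : SL(2, ℝ)) : Matrix (Fin 2) (Fin 2) ℝ) =
      2 * cos φ * exp (-s) := by
  rw [Matrix.SpecialLinearGroup.coe_mul, Matrix.SpecialLinearGroup.coe_inv, coe_companionSL,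
    coe_diagSL, adjugate_fin_two_of]
  simp [trace_fin_two]

theorem dense_of_companionSL_sq_mem {φ : ℝ}
    (hφ : Irrational (φ / π)) (hmem : companionSL φ ^ 2 ∈ Γ) {s : ℝ} (hs : s ≠ 0)
    (hdiag : diagSL s ∈ Γ) : Dense (Γ : Set SL(2, ℝ)) := by
  have htwo : Irrational (2 * φ / π) := by
    rw [mul_div_assoc]
    exact mod_cast hφ.natCast_mul two_ne_zero
  refine dense_of_isElliptic_of_isHyperbolic hmem ?_ (fun r hr => ?_) hdiag
    (isHyperbolic_diagSL hs)
  · rw [isElliptic_coe_iff, trace_companionSL_sq, abs_mul, abs_two]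
    linarith [abs_cos_lt_one_iff.mpr (sin_ne_zero_of_irrational htwo)]
  · rw [trace_companionSL_sq, mul_right_inj' two_ne_zero] at hr
    exact cos_ne_cos_rat_mul_pi htwo r hr

theorem isAlgebraic_rat_cos_rat_mul_pi (r : ℚ) : IsAlgebraic ℚ (cos (r * π)) :=
  (isAlgebraic_cos_rat_mul_pi r).extendScalars (algebraMap ℤ ℚ).injective_int

theorem dense_of_companionSL_mem {φ : ℝ}
    (halg : IsAlgebraic ℚ (cos φ)) (hcos : cos φ ≠ 0) (hmem : companionSL φ ∈ Γ)
    {s : ℝ} (hs : 0 < s) (htrans : Transcendental ℚ (exp s)) (hdiag : diagSL s ∈ Γ) :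
    Dense (Γ : Set SL(2, ℝ)) := by
  refine dense_of_isElliptic_of_isHyperbolic (Γ.mul_mem (Γ.inv_mem hmem) hdiag) ?_
    (fun r hr => ?_) hdiag (isHyperbolic_diagSL hs.ne')
  · rw [isElliptic_coe_iff, trace_companionSL_inv_mul_diagSL, mul_assoc, abs_mul, abs_two, abs_mul,
      abs_exp]
    have hexp : exp (-s) < 1 := by rwa [exp_lt_one_iff, neg_lt_zero]
    nlinarith [abs_cos_le_one φ, exp_pos (-s)]
  · rw [trace_companionSL_inv_mul_diagSL, mul_assoc, mul_right_inj' two_ne_zero] at hr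
    have hexp : exp s = cos φ * (cos (r * π))⁻¹ := by
      rw [← hr, mul_inv, mul_inv_cancel_left₀ hcos, exp_neg, inv_inv]
    exact htrans (hexp ▸ halg.mul (isAlgebraic_rat_cos_rat_mul_pi r).inv)

end GeneratorPairs

section Density

variable {H : Subgroup (SL(2, ℝ) × SL(2, ℝ))}

theorem companionSL_two_pi_div_pow (n : ℕ) (hn : 2 < n) : companionSL (2 * π / n) ^ n = 1 := by
  have hn₀ : (2 : ℝ) < n := mod_cast hn
  have hsin : sin (2 * π / n) ≠ 0 := by
    refine (sin_pos_of_pos_of_lt_pi (by positivity) ?_).ne'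
    rw [div_lt_iff₀ (by positivity), mul_comm]
    exact mul_lt_mul_of_pos_left hn₀ pi_pos
  refine pow_eq_one_of_trace_eq (isElliptic_companionSL hsin) (trace_companionSL _) ?_
  rw [← rotSL_natCast_mul, mul_div_cancel₀ _ (by positivity), rotSL_two_pi]

theorem cos_two_pi_div_pos {x : ℝ} (hx : 4 < x) : 0 < cos (2 * π / x) := by
  have hpi := pi_pos
  refine cos_pos_of_mem_Ioo ⟨by linarith [show 0 < 2 * π / x by positivity], ?_⟩
  rw [div_lt_iff₀ (by positivity)]
  nlinarith

theorem isAlgebraic_cos_two_pi_div (n : ℕ) : IsAlgebraic ℚ (cos (2 * π / n)) := by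
  have hrat := isAlgebraic_rat_cos_rat_mul_pi (2 / n)
  push_cast at hrat
  rwa [div_mul_eq_mul_div] at hrat

-- The odd power kills the torsion generator and recovers `F` from `F ^ 2`.
theorem eq_top_of_companionSL_sq_diagSL_mem (hH : IsClosed (H : Set (SL(2, ℝ) × SL(2, ℝ))))
    {m : ℕ} (hm : Odd m) (hm₄ : 4 < m) {φ : ℝ} (hφ : Irrational (φ / π))
    {s : ℝ} (hs : 0 < s) (htrans : Transcendental ℚ (exp s))
    (hfst : (companionSL (2 * π / m) ^ 2, diagSL s) ∈ H)
    (hsnd : (diagSL s, companionSL φ ^ 2) ∈ H) : H = ⊤ := by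
  have hpow : companionSL (2 * π / m) ^ m = 1 := companionSL_two_pi_div_pow m (by lia)
  have hdense_snd : Dense (H.map (MonoidHom.snd SL(2, ℝ) SL(2, ℝ)) : Set SL(2, ℝ)) :=
    dense_of_companionSL_sq_mem hφ ⟨_, hsnd, rfl⟩ hs.ne' ⟨_, hfst, rfl⟩
  have hdense_fst : Dense (H.map (MonoidHom.fst SL(2, ℝ) SL(2, ℝ)) : Set SL(2, ℝ)) := by
    have hroot : companionSL (2 * π / m) ∈ H.map (MonoidHom.fst SL(2, ℝ) SL(2, ℝ)) := by
      obtain ⟨k, rfl⟩ := hm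
      refine ⟨_, H.pow_mem hfst (k + 1), ?_⟩
      calc (companionSL (2 * π / (2 * k + 1 : ℕ)) ^ 2) ^ (k + 1)
          = companionSL (2 * π / (2 * k + 1 : ℕ)) ^ (2 * k + 1) *
              companionSL (2 * π / (2 * k + 1 : ℕ)) := by
            rw [← pow_mul, ← pow_succ]
            ring_nf
        _ = companionSL (2 * π / (2 * k + 1 : ℕ)) := by rw [hpow, one_mul]
    exact dense_of_companionSL_mem (isAlgebraic_cos_two_pi_div m)
      (cos_two_pi_div_pos (mod_cast hm₄)).ne' hroot hs htrans ⟨_, hsnd, rfl⟩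
  refine eq_top_of_comap_inr_eq_top hH hdense_fst <|
    eq_top_of_normal_of_diag2_mem (a := exp (m * s))
      (normal_comap_inr_of_dense_map_snd hH hdense_snd) (exp_ne_zero _) ?_ ?_
  · rw [← exp_nat_mul, Ne, exp_eq_one_iff]
    positivity
  · change ((1 : SL(2, ℝ)), diagSL (m * s)) ∈ H
    have hone : (companionSL (2 * π / m) ^ 2) ^ m = 1 := by rw [pow_right_comm, hpow, one_pow]
    rw [diagSL_natCast_mul, ← hone]
    exact H.pow_mem hfst m

theorem eq_top_of_diagSL_companionSL_sq_mem (hH : IsClosed (H : Set (SL(2, ℝ) × SL(2, ℝ))))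
    {m : ℕ} (hm : Odd m) (hm₄ : 4 < m) {φ : ℝ} (hφ : Irrational (φ / π))
    {s : ℝ} (hs : 0 < s) (htrans : Transcendental ℚ (exp s))
    (hfst : (companionSL φ ^ 2, diagSL s) ∈ H)
    (hsnd : (diagSL s, companionSL (2 * π / m) ^ 2) ∈ H) : H = ⊤ := by
  have hswap : H.comap (MulEquiv.prodComm : SL(2, ℝ) × SL(2, ℝ) ≃* _).toMonoidHom = ⊤ :=
    eq_top_of_companionSL_sq_diagSL_mem (hH.preimage continuous_swap) hm hm₄ hφ hs htrans hsnd hfst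
  exact Subgroup.comap_injective MulEquiv.prodComm.surjective hswap

end Density

section RotationAngles

/-- The function `t ↦ t · d(2 / t, ℤ)`, a continuous sawtooth which makes `2 / t ± d(2 / t, ℤ)`
continuous after multiplication by `t`. At `t = 0` the factor `t` gives the limit `0`, whatever the
junk value `2 / 0`. -/
noncomputable def sawtooth (t : ℝ) : ℝ :=
  t * ‖((2 / t : ℝ) : UnitAddCircle)‖

theorem abs_sawtooth_le (t : ℝ) : |sawtooth t| ≤ |t| / 2 := by
  have hdist : ‖((2 / t : ℝ) : UnitAddCircle)‖ ≤ 1 / 2 := by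
    rw [UnitAddCircle.norm_eq]
    exact abs_sub_round _
  rw [sawtooth, abs_mul, abs_norm, div_eq_mul_one_div |t|]
  exact mul_le_mul_of_nonneg_left hdist (abs_nonneg t)

theorem continuous_sawtooth : Continuous sawtooth := by
  refine continuous_iff_continuousAt.mpr fun t => ?_
  rcases eq_or_ne t 0 with rfl | ht
  · have hlim : Tendsto (fun t : ℝ => |t| / 2) (𝓝 0) (𝓝 0) :=
      (by fun_prop : Continuous fun t : ℝ => |t| / 2).tendsto' _ _ (by simp)
    rw [ContinuousAt, sawtooth, zero_mul]
    exact squeeze_zero_norm abs_sawtooth_le hlim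
  · have hquot : ContinuousAt (fun t : ℝ => 2 / t) t := continuousAt_const.div continuousAt_id ht
    exact continuousAt_id.mul ((AddCircle.continuous_mk' 1).continuousAt.comp hquot).norm

/-- The angle `2π / (2 (2 / t + ε d(2 / t, ℤ)) + 1)`, extended continuously by `0` at `t = 0`. For
`ε = ±1` and `t` in `[0, 1]`, one of the two angles is `2π / m` with `m ≥ 5` an odd integer. -/
noncomputable def rotationAngle (ε t : ℝ) : ℝ :=
  2 * π * t / (2 * (2 + ε * sawtooth t) + t)

theorem rotationAngle_zero (ε : ℝ) : rotationAngle ε 0 = 0 := by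
  rw [rotationAngle, mul_zero, zero_div]

theorem continuousOn_rotationAngle {ε : ℝ} (hε : |ε| ≤ 1) :
    ContinuousOn (rotationAngle ε) (Icc 0 1) := by
  have hsaw : Continuous sawtooth := continuous_sawtooth
  refine ContinuousOn.div (by fun_prop) (by fun_prop) fun t ht => ne_of_gt ?_
  have hle : |ε * sawtooth t| ≤ 1 / 2 := by
    have hbound := abs_sawtooth_le t
    rw [abs_of_nonneg ht.1] at hbound
    rw [abs_mul]
    nlinarith [abs_nonneg (sawtooth t), ht.2]
  linarith [neg_le_of_abs_le hle, ht.1]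

theorem rotationAngle_eq_div {t : ℝ} (ht : t ≠ 0) (ε : ℝ) :
    rotationAngle ε t = 2 * π / (2 * (2 / t + ε * |2 / t - round (2 / t)|) + 1) := by
  rw [rotationAngle, sawtooth, UnitAddCircle.norm_eq, ← mul_div_mul_left (2 * π) _ ht,
    mul_comm t (2 * π)]
  congr 1
  field_simp

theorem irrational_two_pi_div_div_pi {x : ℝ} (hx : Irrational x) : Irrational (2 * π / x / π) := by
  rw [div_right_comm, mul_div_cancel_right₀ _ pi_ne_zero]
  exact mod_cast hx.natCast_div two_ne_zero

theorem exists_odd_rotationAngle_eq {t : ℝ} (ht : t ∈ Icc 0 1) (hirr : Irrational t) :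
    ∃ m : ℕ, Odd m ∧ 4 < m ∧
      (rotationAngle 1 t = 2 * π / m ∧ Irrational (rotationAngle (-1) t / π) ∨
        rotationAngle (-1) t = 2 * π / m ∧ Irrational (rotationAngle 1 t / π)) := by
  have ht₀ : 0 < t := ht.1.lt_of_ne' hirr.ne_zero
  have hround : 2 ≤ round (2 / t) := by
    have htwo : 2 ≤ 2 / t := (le_div_iff₀ ht₀).mpr (by linarith [ht.2])
    have hlt : (1 : ℝ) < round (2 / t) := by linarith [le_of_abs_le (abs_sub_round (2 / t))]
    exact_mod_cast hlt
  obtain ⟨n, hn⟩ := Int.eq_ofNat_of_zero_le (zero_le_two.trans hround)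
  have hother : Irrational (2 * π / (8 / t - 2 * n + 1) / π) := by
    have hquot : Irrational (8 / t) := mod_cast hirr.natCast_div (m := 8) (by norm_num)
    exact irrational_two_pi_div_div_pi (mod_cast (hquot.sub_natCast (2 * n)).add_natCast 1)
  refine ⟨2 * n + 1, odd_two_mul_add_one n, by lia, ?_⟩
  rw [rotationAngle_eq_div ht₀.ne', rotationAngle_eq_div ht₀.ne', hn]
  push_cast
  rcases le_total (2 / t) n with hle | hle
  · left
    rw [abs_of_nonpos (sub_nonpos.mpr hle)]
    exact ⟨by ring_nf, by convert hother using 3; ring⟩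
  · right
    rw [abs_of_nonneg (sub_nonneg.mpr hle)]
    exact ⟨by ring_nf, by convert hother using 3; ring⟩

end RotationAngles

section PairRepresentation

/-- The representation `a ↦ (F α ^ 2, D)`, `b ↦ (D, F β ^ 2)` of the free group on two generators,
where `F = companionSL` and `D = diagSL s`. -/
noncomputable def pairRep (s α β : ℝ) : FreeGroup (Fin 2) →* SL(2, ℝ) × SL(2, ℝ) :=
  (FreeGroup.lift ![companionSL α ^ 2, diagSL s]).prod
    (FreeGroup.lift ![diagSL s, companionSL β ^ 2])

theorem continuousOn_pairRep_apply {s : ℝ} {α β : ℝ → ℝ} {S : Set ℝ} (hα : ContinuousOn α S)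
    (hβ : ContinuousOn β S) (γ : FreeGroup (Fin 2)) :
    ContinuousOn (fun t => pairRep s (α t) (β t) γ) S := by
  have hcomp {θ : ℝ → ℝ} (hθ : ContinuousOn θ S) :
      ContinuousOn (fun t => companionSL (θ t) ^ 2) S :=
    (continuous_companionSL.comp_continuousOn hθ).pow 2
  refine (continuousOn_lift_apply ?_ γ).prodMk (continuousOn_lift_apply ?_ γ) <;>
    rw [Fin.forall_fin_two]
  · exact ⟨hcomp hα, continuousOn_const⟩
  · exact ⟨continuousOn_const, hcomp hβ⟩

theorem norm_le_mu2_pairRep {s : ℝ} (hs : 6 ≤ exp s) (γ : FreeGroup (Fin 2)) :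
    γ.norm ≤ mu2 (pairRep s 0 0 γ).1 + mu2 (pairRep s 0 0 γ).2 := by
  have hfst : letterCount 1 γ ≤ mu2 (pairRep s 0 0 γ).1 :=
    letterCount_le_mu2_lift rfl (by simp) hs γ
  have hsnd : letterCount 0 γ ≤ mu2 (pairRep s 0 0 γ).2 :=
    letterCount_le_mu2_lift rfl (by simp) hs γ
  rw [← sum_letterCount, Fin.sum_univ_two]
  push_cast
  linarith

theorem exists_mu2_add_mu2_le {ι : Type*} [Finite ι] [DecidableEq ι]
    (ρ : FreeGroup ι →* SL(2, ℝ) × SL(2, ℝ)) :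
    ∃ c, 1 ≤ c ∧ ∀ γ, mu2 (ρ γ).1 + mu2 (ρ γ).2 ≤ c * γ.norm := by
  refine exists_le_mul_norm_of_subadditive _ ?_ fun x y => ?_
  · simp [mu2_one]
  · rw [map_mul, Prod.fst_mul, Prod.snd_mul]
    linarith [mu2_mul_le (ρ x).1 (ρ y).1, mu2_mul_le (ρ x).2 (ρ y).2]

theorem exists_quasiIsometry_constants_pairRep {s : ℝ} (hs : 6 ≤ exp s) :
    ∃ c : ℝ, 1 ≤ c ∧ ∀ γ, c⁻¹ * γ.norm ≤ mu2 (pairRep s 0 0 γ).1 + mu2 (pairRep s 0 0 γ).2 ∧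
      mu2 (pairRep s 0 0 γ).1 + mu2 (pairRep s 0 0 γ).2 ≤ c * γ.norm := by
  obtain ⟨c, hc, hupper⟩ := exists_mu2_add_mu2_le (pairRep s 0 0)
  refine ⟨c, hc, fun γ => ⟨?_, hupper γ⟩⟩
  exact (mul_le_of_le_one_left γ.norm.cast_nonneg (inv_le_one_of_one_le₀ hc)).trans
    (norm_le_mu2_pairRep hs γ)

theorem dense_range_pairRep {s : ℝ} (hs : 0 < s) (htrans : Transcendental ℚ (exp s)) {t : ℝ}
    (ht : t ∈ Icc 0 1) (hirr : Irrational t) :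
    DenseRange (pairRep s (rotationAngle 1 t) (rotationAngle (-1) t)) := by
  set ρ := pairRep s (rotationAngle 1 t) (rotationAngle (-1) t) with hρ
  have hclosed := ρ.range.isClosed_topologicalClosure
  have ha : (companionSL (rotationAngle 1 t) ^ 2, diagSL s) ∈ ρ.range.topologicalClosure :=
    ρ.range.le_topologicalClosure ⟨.of 0, by simp [hρ, pairRep]⟩
  have hb : (diagSL s, companionSL (rotationAngle (-1) t) ^ 2) ∈ ρ.range.topologicalClosure :=
    ρ.range.le_topologicalClosure ⟨.of 1, by simp [hρ, pairRep]⟩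
  suffices ρ.range.topologicalClosure = ⊤ by
    simpa only [MonoidHom.coe_range] using! dense_of_topologicalClosure_eq_top this
  obtain ⟨m, hm, hm₄, ⟨hangle, hother⟩ | ⟨hangle, hother⟩⟩ := exists_odd_rotationAngle_eq ht hirr
  · rw [hangle] at ha
    exact eq_top_of_companionSL_sq_diagSL_mem hclosed hm hm₄ hother hs htrans ha hb
  · rw [hangle] at hb
    exact eq_top_of_diagSL_companionSL_sq_mem hclosed hm hm₄ hother hs htrans ha hb

end PairRepresentation

/-- There is a continuous family `(ρ_t)_{t ∈ [0,1]}` of homomorphisms from the free group on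
two generators to `SL(2,ℝ) × SL(2,ℝ)` such that `ρ₀` is a quasi-isometric embedding while
`ρ_t` has dense image for every irrational `t`. -/
theorem stmt0 :
    ∃ ρ : ℝ → (FreeGroup (Fin 2) →*
        Matrix.SpecialLinearGroup (Fin 2) ℝ × Matrix.SpecialLinearGroup (Fin 2) ℝ),
      -- (1) continuity in `t` (for the matrix topology on each factor)
      (∀ γ : FreeGroup (Fin 2),
        ContinuousOn (fun t : ℝ =>
          (((ρ t γ).1 : Matrix (Fin 2) (Fin 2) ℝ),
            ((ρ t γ).2 : Matrix (Fin 2) (Fin 2) ℝ))) (Set.Icc 0 1)) ∧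
      -- (2) `ρ₀` is a quasi-isometric embedding
      (∃ c C : ℝ, 1 ≤ c ∧ 0 ≤ C ∧ ∀ γ : FreeGroup (Fin 2),
        c⁻¹ * (wordLength γ : ℝ) - C ≤ mu2 (ρ 0 γ).1 + mu2 (ρ 0 γ).2 ∧
        mu2 (ρ 0 γ).1 + mu2 (ρ 0 γ).2 ≤ c * (wordLength γ : ℝ) + C) ∧
      -- (3) dense image for irrational `t`
      (∀ t ∈ Set.Icc (0 : ℝ) 1, Irrational t →
        ∀ p : Matrix.SpecialLinearGroup (Fin 2) ℝ × Matrix.SpecialLinearGroup (Fin 2) ℝ,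
          ((p.1 : Matrix (Fin 2) (Fin 2) ℝ), (p.2 : Matrix (Fin 2) (Fin 2) ℝ)) ∈
            closure (Set.range fun γ : FreeGroup (Fin 2) =>
              (((ρ t γ).1 : Matrix (Fin 2) (Fin 2) ℝ),
                ((ρ t γ).2 : Matrix (Fin 2) (Fin 2) ℝ)))) := by
  obtain ⟨s, hs, htrans⟩ := exists_lt_exp_transcendental 6
  have hs₀ : 0 < s := one_lt_exp_iff.mp (by linarith)
  have hcoe : Continuous fun p : SL(2, ℝ) × SL(2, ℝ) =>
      ((p.1 : Matrix (Fin 2) (Fin 2) ℝ), (p.2 : Matrix (Fin 2) (Fin 2) ℝ)) :=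
    continuous_subtype_val.prodMap continuous_subtype_val
  refine ⟨fun t => pairRep s (rotationAngle 1 t) (rotationAngle (-1) t), fun γ => ?_, ?_,
    fun t ht hirr p => ?_⟩
  · exact hcoe.comp_continuousOn <| continuousOn_pairRep_apply
      (continuousOn_rotationAngle (by simp)) (continuousOn_rotationAngle (by simp)) γ
  · obtain ⟨c, hc, hbounds⟩ := exists_quasiIsometry_constants_pairRep hs.le
    refine ⟨c, 0, hc, le_rfl, fun γ => ?_⟩
    simpa only [rotationAngle_zero, sub_zero, add_zero] using! hbounds γ
  · have hmem := mem_closure_image hcoe.continuousAt (dense_range_pairRep hs₀ htrans ht hirr p)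
    rwa [← range_comp] at hmem
end

section
/- Let d ≥ 2 and g ∈ GL(d,ℝ), and for every integer n ≥ 1 fix a singular value decomposition gⁿ = k(n)·diag(α(n))·k'(n). Then the following are equivalent: (i) g is proximal in the projective space P(ℝ^d), i.e. there exist a nonzero vector v ∈ ℝ^d, a scalar c ∈ ℝ with g·v = c·v, a g-invariant linear subspace W with ℝ^d = ℝv ⊕ W, and constants 0 ≤ ρ < |c| and C₀ > 0 such that ‖gⁿ·x‖ ≤ C₀·ρⁿ·‖x‖ for all x ∈ W and all n ∈ ℕ; (ii) log(α(n) 0) − log(α(n) 1) − 2·log n → +∞ as n → +∞. -/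
open Matrix

/-- The action of a `d × d` real matrix on Euclidean `ℝ^d`. -/
noncomputable def appE {d : ℕ} (M : Matrix (Fin d) (Fin d) ℝ)
    (v : EuclideanSpace ℝ (Fin d)) : EuclideanSpace ℝ (Fin d) :=
  Matrix.toEuclideanLin M v

/-- `IsSVD g k α k'` means `g = k · diag(α) · k'` is a singular value decomposition:
`k, k'` are orthogonal and `α` is positive and nonincreasing. -/
def IsSVD {d : ℕ} (g k : Matrix (Fin d) (Fin d) ℝ) (α : Fin d → ℝ)
    (k' : Matrix (Fin d) (Fin d) ℝ) : Prop :=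
  k * kᵀ = 1 ∧ k' * k'ᵀ = 1 ∧ (∀ i, 0 < α i) ∧ Antitone α ∧
    g = k * Matrix.diagonal α * k'

/-!
The norms of `gⁿ` and of `Λ² gⁿ` are `α n 0` and `ω n := α n 0 * α n 1`, so (ii) says that
`ω n / ‖gⁿ‖² = α n 1 / α n 0 = o(n⁻²)`.

If (i) holds, `α n 0 = ‖gⁿ‖ ≥ |c|ⁿ`, while `α n 1 ≤ C₀ ρⁿ` because `W` is a hyperplane, so the ratio
`α n 1 / α n 0` decays exponentially.

Conversely, let `a n` be the leading left singular direction of `gⁿ`. The area bound shows that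
`a n` and `a (n + 1)` are within `O(ω n / ‖gⁿ‖²) = o(n⁻²)` of each other, so `a n` converges to a
unit vector `v` with error `o(n⁻¹)`, and `v` is an eigenvector, for an eigenvalue `c` say. Then
`‖gⁿ⁺¹‖ ≤ ‖gⁿ‖ (|c| + o(n⁻¹))`, and this borderline rate gives `‖gⁿ‖ = O(n |c|ⁿ)`. The gain `o(n⁻²)`
absorbs the square of the factor `n`, hence `ω n = o(|c|²ⁿ)`: some power of `g` contracts areas
relative to `|c|²ⁿ`, i.e. contracts the quotient by `ℝ v` relative to `|c|ⁿ`, which yields a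
dominated complement of `ℝ v`.
-/

section Asymptotics

open Filter Asymptotics Topology

theorem exists_sub_isLittleO_inv_of_succ_sub_isLittleO_inv_sq {F : Type*} [NormedAddCommGroup F]
    [CompleteSpace F] {f : ℕ → F}
    (hf : (fun n => f (n + 1) - f n) =o[atTop] fun n : ℕ => ((n : ℝ) ^ 2)⁻¹) :
    ∃ v, (fun n => f n - v) =o[atTop] fun n : ℕ => (n : ℝ)⁻¹ := by
  have hsum : Summable fun n => dist (f n) (f (n + 1)) := by
    simp only [dist_eq_norm_sub']
    exact summable_of_isBigO_nat (Real.summable_nat_pow_inv.2 one_lt_two) hf.norm_left.isBigO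
  obtain ⟨v, hv⟩ := cauchySeq_tendsto_of_complete (cauchySeq_of_summable_dist hsum)
  refine ⟨v, isLittleO_iff.2 fun ε hε => ?_⟩
  obtain ⟨N, hN⟩ := eventually_atTop.1 (isLittleO_iff.1 hf (half_pos hε))
  filter_upwards [eventually_ge_atTop (N + 1)] with n hn
  obtain ⟨k, rfl⟩ : ∃ k, n = k + 1 := ⟨n - 1, by omega⟩
  have tail_le : ∀ m ≥ k + 1, dist (f (k + 1)) (f m) ≤ ε * ((k + 1 : ℕ) : ℝ)⁻¹ := fun m hm =>
    calc dist (f (k + 1)) (f m) ≤ ∑ i ∈ Finset.Ico (k + 1) m, ε / 2 * ((i : ℝ) ^ 2)⁻¹ :=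
          dist_le_Ico_sum_of_dist_le hm fun {i} hi _ => by
            simpa [dist_eq_norm_sub'] using hN i (by omega)
      _ = ε / 2 * ∑ i ∈ Finset.Ioo k m, ((i : ℝ) ^ 2)⁻¹ := by
          rw [← Finset.mul_sum, ← Finset.Ico_succ_left_eq_Ioo, Nat.succ_eq_succ]
      _ ≤ ε / 2 * (2 / (k + 1)) := by gcongr; exact sum_Ioo_inv_sq_le k m
      _ = ε * ((k + 1 : ℕ) : ℝ)⁻¹ := by push_cast; ring
  rw [← dist_eq_norm, norm_inv, Real.norm_natCast]
  exact le_of_tendsto (tendsto_const_nhds.dist hv) ((eventually_ge_atTop _).mono tail_le)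

theorem isBigO_natCast_mul_pow_of_succ_le {s e : ℕ → ℝ} {c : ℝ} (hc : 0 < c) (hs : ∀ n, 0 ≤ s n)
    (hsucc : ∀ᶠ n in atTop, s (n + 1) ≤ s n * (c + e n))
    (he : e =o[atTop] fun n : ℕ => (n : ℝ)⁻¹) :
    s =O[atTop] fun n : ℕ => (n : ℝ) * c ^ n := by
  obtain ⟨N, hN⟩ := eventually_atTop.1
    ((hsucc.and (isLittleO_iff.1 he hc)).and (eventually_gt_atTop 0))
  have hN0 : (0 : ℝ) < N := Nat.cast_pos.2 (hN N le_rfl).2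
  have telescoped : ∀ n ≥ N, s n ≤ s N / (N * c ^ N) * (n * c ^ n) := by
    intro n hn
    induction n, hn using Nat.le_induction with
    | base => rw [div_mul_cancel₀ _ (by positivity)]
    | succ n hn ih =>
      obtain ⟨⟨hstep, he_n⟩, hn0⟩ := hN n hn
      have hn0 : (0 : ℝ) < n := Nat.cast_pos.2 hn0
      rw [norm_inv, Real.norm_natCast] at he_n
      calc s (n + 1) ≤ s n * (c + c * (n : ℝ)⁻¹) := by
            refine hstep.trans ?_
            gcongr
            exacts [hs n, (Real.le_norm_self _).trans he_n]
        _ ≤ s N / (N * c ^ N) * (n * c ^ n) * (c + c * (n : ℝ)⁻¹) := by gcongr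
        _ = s N / (N * c ^ N) * ((n + 1 : ℕ) * c ^ (n + 1)) := by
          push_cast
          field_simp
          ring
  refine IsBigO.of_bound (s N / (N * c ^ N)) ((eventually_ge_atTop N).mono fun n hn => ?_)
  rw [Real.norm_of_nonneg (hs n), Real.norm_of_nonneg (by positivity)]
  exact telescoped n hn

theorem tendsto_log_sub_log_sub_two_mul_log_iff {s t : ℕ → ℝ} (hs : ∀ᶠ n in atTop, 0 < s n)
    (ht : ∀ᶠ n in atTop, 0 < t n) :
    Tendsto (fun n : ℕ => Real.log (s n) - Real.log (t n) - 2 * Real.log n) atTop atTop ↔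
      (fun n => t n / s n) =o[atTop] fun n : ℕ => ((n : ℝ) ^ 2)⁻¹ := by
  have log_le_iff : ∀ b : ℝ,
      (∀ᶠ n : ℕ in atTop, b ≤ Real.log (s n) - Real.log (t n) - 2 * Real.log n) ↔
        ∀ᶠ n : ℕ in atTop, ‖t n / s n‖ ≤ Real.exp (-b) * ‖((n : ℝ) ^ 2)⁻¹‖ := by
    refine fun b => eventually_congr ?_
    filter_upwards [hs, ht, eventually_gt_atTop 0] with n hs ht hn
    have : (0 : ℝ) < n := Nat.cast_pos.2 hn
    rw [Real.norm_of_nonneg (by positivity), Real.norm_of_nonneg (by positivity),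
      ← Real.log_le_log_iff (div_pos ht hs) (by positivity), Real.log_div ht.ne' hs.ne',
      Real.log_mul (by positivity) (by positivity), Real.log_exp, Real.log_inv, Real.log_pow]
    push_cast
    constructor <;> intro <;> linarith
  rw [tendsto_atTop, isLittleO_iff]
  refine ⟨fun h ε hε => ?_, fun h b => (log_le_iff b).2 (h (Real.exp_pos _))⟩
  simpa only [neg_neg, Real.exp_log hε] using (log_le_iff (-Real.log ε)).1 (h _)

theorem pow_isLittleO_inv_sq {r : ℝ} (hr : |r| < 1) :
    (fun n : ℕ => r ^ n) =o[atTop] fun n : ℕ => ((n : ℝ) ^ 2)⁻¹ := by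
  have sq_mul := isLittleO_pow_const_mul_const_pow_const_pow_of_norm_lt (R := ℝ) 2 (r₁ := r) hr
  refine (sq_mul.mul_isBigO (isBigO_refl (fun n : ℕ => ((n : ℝ) ^ 2)⁻¹) atTop)).congr' ?_ ?_
  · filter_upwards [eventually_ne_atTop 0] with n hn
    have : (n : ℝ) ≠ 0 := Nat.cast_ne_zero.2 hn
    field_simp
  · exact .of_forall fun n => by simp only [one_pow, one_mul]

end Asymptotics

section Area

open Filter Topology
open scoped RealInnerProductSpace

theorem exists_norm_eq_one_norm_map_eq_opNorm {E F : Type*} [NormedAddCommGroup E]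
    [NormedSpace ℝ E] [FiniteDimensional ℝ E] [Nontrivial E] [NormedAddCommGroup F]
    [NormedSpace ℝ F] (T : E →L[ℝ] F) : ∃ b, ‖b‖ = 1 ∧ ‖T b‖ = ‖T‖ := by
  have : ProperSpace E := FiniteDimensional.proper_real E
  obtain ⟨b, hb, hmax⟩ := (isCompact_sphere (0 : E) 1).exists_isMaxOn
    (NormedSpace.sphere_nonempty.2 zero_le_one) T.continuous.norm.continuousOn
  rw [mem_sphere_zero_iff_norm] at hb
  refine ⟨b, hb, le_antisymm (T.unit_le_opNorm b hb.le) ?_⟩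
  exact T.opNorm_le_of_unit_norm (norm_nonneg _) fun x hx => hmax (mem_sphere_zero_iff_norm.2 hx)

variable {E : Type*} [NormedAddCommGroup E] [InnerProductSpace ℝ E]

/-- The area of the parallelogram spanned by `x` and `y`, i.e. the norm of `x ∧ y`; it is the square
root of the Gram determinant. -/
noncomputable def parallelogramArea (x y : E) : ℝ :=
  √(‖x‖ ^ 2 * ‖y‖ ^ 2 - ⟪x, y⟫ ^ 2)

theorem parallelogramArea_sq (x y : E) :
    parallelogramArea x y ^ 2 = ‖x‖ ^ 2 * ‖y‖ ^ 2 - ⟪x, y⟫ ^ 2 := by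
  refine Real.sq_sqrt (sub_nonneg.2 ?_)
  rw [← mul_pow]
  exact sq_le_sq.2 ((abs_real_inner_le_norm x y).trans (le_abs_self _))

theorem parallelogramArea_nonneg (x y : E) : 0 ≤ parallelogramArea x y :=
  Real.sqrt_nonneg _

theorem parallelogramArea_comm (x y : E) : parallelogramArea x y = parallelogramArea y x := by
  rw [parallelogramArea, parallelogramArea, real_inner_comm, mul_comm]

theorem parallelogramArea_smul_left (r : ℝ) (x y : E) :
    parallelogramArea (r • x) y = |r| * parallelogramArea x y := by
  rw [parallelogramArea, parallelogramArea, ← Real.sqrt_sq_eq_abs, ← Real.sqrt_mul (sq_nonneg r),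
    norm_smul, real_inner_smul_left, Real.norm_eq_abs, mul_pow, sq_abs]
  congr 1
  ring

theorem parallelogramArea_smul_right (r : ℝ) (x y : E) :
    parallelogramArea x (r • y) = |r| * parallelogramArea x y := by
  rw [parallelogramArea_comm, parallelogramArea_smul_left, parallelogramArea_comm]

theorem parallelogramArea_le_norm_mul_norm (x y : E) : parallelogramArea x y ≤ ‖x‖ * ‖y‖ := by
  refine Real.sqrt_le_iff.2 ⟨by positivity, ?_⟩
  rw [mul_pow]
  exact sub_le_self _ (sq_nonneg _)

theorem tendsto_parallelogramArea {ι : Type*} {l : Filter ι} {f g : ι → E} {x y : E}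
    (hf : Tendsto f l (𝓝 x)) (hg : Tendsto g l (𝓝 y)) :
    Tendsto (fun i => parallelogramArea (f i) (g i)) l (𝓝 (parallelogramArea x y)) :=
  (((hf.norm.pow 2).mul (hg.norm.pow 2)).sub ((hf.inner hg).pow 2)).sqrt

theorem parallelogramArea_eq_norm_starProjection {x : E} (hx : ‖x‖ = 1) (y : E) :
    parallelogramArea x y = ‖(ℝ ∙ x)ᗮ.starProjection y‖ := by
  rw [← sq_eq_sq₀ (parallelogramArea_nonneg x y) (norm_nonneg _), parallelogramArea_sq,
    Submodule.starProjection_orthogonal_val, Submodule.starProjection_unit_singleton ℝ hx,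
    norm_sub_sq_real, norm_smul, inner_smul_right, real_inner_comm, hx, Real.norm_eq_abs, mul_one,
    sq_abs]
  ring

theorem eq_inner_smul_of_parallelogramArea_eq_zero {x y : E} (hx : ‖x‖ = 1)
    (h : parallelogramArea x y = 0) : y = ⟪x, y⟫ • x := by
  rwa [parallelogramArea_eq_norm_starProjection hx, norm_eq_zero,
    Submodule.starProjection_orthogonal_val, sub_eq_zero,
    Submodule.starProjection_unit_singleton ℝ hx] at h

theorem norm_sub_le_two_mul_parallelogramArea {x y : E} (hx : ‖x‖ = 1) (hy : ‖y‖ = 1)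
    (hxy : 0 ≤ ⟪x, y⟫) : ‖x - y‖ ≤ 2 * parallelogramArea x y := by
  rw [← sq_le_sq₀ (norm_nonneg _) (mul_nonneg two_pos.le (parallelogramArea_nonneg x y)), mul_pow,
    parallelogramArea_sq, norm_sub_sq_real, hx, hy]
  have : ⟪x, y⟫ ≤ 1 := by simpa [hx, hy] using real_inner_le_norm x y
  nlinarith

theorem norm_map_le_add_opNorm_mul_parallelogramArea {F : Type*} [NormedAddCommGroup F]
    [NormedSpace ℝ F] (T : E →L[ℝ] F) {a : E} (ha : ‖a‖ = 1) (y : E) :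
    ‖T y‖ ≤ ‖T a‖ * ‖y‖ + ‖T‖ * parallelogramArea a y := by
  have hy : y = ⟪a, y⟫ • a + (ℝ ∙ a)ᗮ.starProjection y := by
    rw [Submodule.starProjection_orthogonal_val, Submodule.starProjection_unit_singleton ℝ ha,
      add_sub_cancel]
  have hinner : ‖⟪a, y⟫‖ ≤ ‖y‖ := by simpa [ha] using norm_inner_le_norm (𝕜 := ℝ) a y
  calc ‖T y‖ = ‖⟪a, y⟫ • T a + T ((ℝ ∙ a)ᗮ.starProjection y)‖ := by
        rw [← map_smul, ← map_add, ← hy]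
    _ ≤ ‖⟪a, y⟫‖ * ‖T a‖ + ‖T‖ * ‖(ℝ ∙ a)ᗮ.starProjection y‖ :=
        (norm_add_le _ _).trans (add_le_add (norm_smul_le _ _) (T.le_opNorm _))
    _ ≤ ‖T a‖ * ‖y‖ + ‖T‖ * parallelogramArea a y := by
        rw [parallelogramArea_eq_norm_starProjection ha, mul_comm ‖T a‖]
        gcongr

/-- `ω` is an upper bound for the norm of the exterior square `Λ² T`: the map `T` multiplies areas
by at most `ω`. -/
structure IsAreaBound (T : E →L[ℝ] E) (ω : ℝ) : Prop where
  nonneg : 0 ≤ ω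
  area_map_le : ∀ x y, parallelogramArea (T x) (T y) ≤ ω * parallelogramArea x y

theorem IsAreaBound.mul {S T : E →L[ℝ] E} {σ τ : ℝ} (hS : IsAreaBound S σ) (hT : IsAreaBound T τ) :
    IsAreaBound (S * T) (σ * τ) where
  nonneg := mul_nonneg hS.nonneg hT.nonneg
  area_map_le x y := by
    rw [mul_assoc]
    exact (hS.area_map_le _ _).trans
      (mul_le_mul_of_nonneg_left (hT.area_map_le x y) hS.nonneg)

theorem isAreaBound_one_of_mem_unitary [CompleteSpace E] {U : E →L[ℝ] E}
    (hU : U ∈ unitary (E →L[ℝ] E)) : IsAreaBound U 1 where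
  nonneg := zero_le_one
  area_map_le x y := by
    rw [one_mul, parallelogramArea, parallelogramArea,
      ContinuousLinearMap.inner_map_map_of_mem_unitary hU,
      ContinuousLinearMap.norm_map_of_mem_unitary hU,
      ContinuousLinearMap.norm_map_of_mem_unitary hU]

/-- `a` is a unit vector spanning the image under `T` of a direction that `T` stretches most, i.e. a
left singular vector for the largest singular value `‖T‖`. -/
structure IsLeadingDirection (T : E →L[ℝ] E) (a : E) : Prop where
  norm_eq_one : ‖a‖ = 1
  exists_map_eq : ∃ b, ‖b‖ = 1 ∧ T b = ‖T‖ • a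

theorem exists_isLeadingDirection_inner_nonneg [FiniteDimensional ℝ E] {T : E →L[ℝ] E} (hT : T ≠ 0)
    (y : E) : ∃ a, IsLeadingDirection T a ∧ 0 ≤ ⟪y, a⟫ := by
  obtain ⟨x, hx⟩ : ∃ x, T x ≠ 0 := by
    by_contra! h
    exact hT (ContinuousLinearMap.ext h)
  have : Nontrivial E := ⟨T x, 0, hx⟩
  obtain ⟨b, hb, hTb⟩ := exists_norm_eq_one_norm_map_eq_opNorm T
  have hT0 : ‖T‖ ≠ 0 := norm_ne_zero_iff.2 hT
  have leading : ∀ c : E, ‖c‖ = 1 → ‖T c‖ = ‖T‖ → IsLeadingDirection T (‖T‖⁻¹ • T c) :=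
    fun c hc hTc => ⟨by rw [norm_smul, norm_inv, norm_norm, hTc, inv_mul_cancel₀ hT0],
      c, hc, (smul_inv_smul₀ hT0 _).symm⟩
  rcases le_total 0 ⟪y, ‖T‖⁻¹ • T b⟫ with h | h
  · exact ⟨_, leading b hb hTb, h⟩
  · refine ⟨_, leading (-b) (by rwa [norm_neg]) (by rwa [map_neg, norm_neg]), ?_⟩
    rwa [map_neg, smul_neg, inner_neg_right, neg_nonneg]

-- Leading directions are defined up to sign; aligning consecutive choices turns nearness of lines
-- into nearness of vectors.
theorem exists_isLeadingDirection_seq_inner_nonneg [FiniteDimensional ℝ E] {T : ℕ → E →L[ℝ] E}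
    (hT : ∀ n, T n ≠ 0) :
    ∃ a : ℕ → E, (∀ n, IsLeadingDirection (T n) (a n)) ∧ ∀ n, 0 ≤ ⟪a n, a (n + 1)⟫ := by
  choose next hnext using fun n => exists_isLeadingDirection_inner_nonneg (hT n)
  let a : ℕ → E := fun n => n.rec (next 0 0) fun n an => next (n + 1) an
  exact ⟨a, fun n => by cases n <;> exact (hnext _ _).1, fun n => (hnext (n + 1) (a n)).2⟩

namespace IsLeadingDirection

variable {S T : E →L[ℝ] E} {a a' : E} {ω : ℝ}

theorem opNorm_mul_area_map_le (ha : IsLeadingDirection T a) (hω : IsAreaBound T ω) (x : E) :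
    ‖T‖ * parallelogramArea a (T x) ≤ ω * ‖x‖ := by
  obtain ⟨b, hb, hTb⟩ := ha.exists_map_eq
  calc ‖T‖ * parallelogramArea a (T x) = parallelogramArea (T b) (T x) := by
        rw [hTb, parallelogramArea_smul_left, abs_norm]
    _ ≤ ω * parallelogramArea b x := hω.area_map_le b x
    _ ≤ ω * ‖x‖ := by
        gcongr
        · exact hω.nonneg
        · simpa [hb] using parallelogramArea_le_norm_mul_norm b x

theorem opNorm_mul_opNorm_mul_area_le (ha : IsLeadingDirection T a) (hω : IsAreaBound T ω)
    (ha' : IsLeadingDirection (T * S) a') :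
    ‖T‖ * ‖T * S‖ * parallelogramArea a a' ≤ ω * ‖S‖ := by
  obtain ⟨b, hb, hTSb⟩ := ha'.exists_map_eq
  calc ‖T‖ * ‖T * S‖ * parallelogramArea a a' = ‖T‖ * parallelogramArea a (T (S b)) := by
        rw [← mul_apply_eq_comp, hTSb, parallelogramArea_smul_right, abs_norm, mul_assoc]
    _ ≤ ω * ‖S b‖ := ha.opNorm_mul_area_map_le hω (S b)
    _ ≤ ω * ‖S‖ := mul_le_mul_of_nonneg_left (S.unit_le_opNorm b hb.le) hω.nonneg

theorem opNorm_mul_opNorm_mul_area_map_le (ha : IsLeadingDirection T a)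
    (ha' : IsLeadingDirection (S * T) a') (hω : IsAreaBound (S * T) ω) :
    ‖T‖ * ‖S * T‖ * parallelogramArea a' (S a) ≤ ω := by
  obtain ⟨b, hb, hTb⟩ := ha.exists_map_eq
  calc ‖T‖ * ‖S * T‖ * parallelogramArea a' (S a)
      = ‖S * T‖ * parallelogramArea a' ((S * T) b) := by
        rw [mul_apply_eq_comp, hTb, map_smul, parallelogramArea_smul_right, abs_norm]
        ring
    _ ≤ ω := by simpa [hb] using ha'.opNorm_mul_area_map_le hω b

theorem opNorm_mul_opNorm_mul_le (ha : IsLeadingDirection T a) (hω : IsAreaBound T ω) :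
    ‖T‖ * ‖S * T‖ ≤ ‖T‖ ^ 2 * ‖S a‖ + ‖S‖ * ω := by
  rw [← norm_norm T, ← norm_smul, norm_norm]
  have := hω.nonneg
  refine ContinuousLinearMap.opNorm_le_bound _ (by positivity) fun x => ?_
  calc ‖(‖T‖ • (S * T)) x‖ = ‖T‖ * ‖S (T x)‖ := by simp [norm_smul]
    _ ≤ ‖T‖ * (‖S a‖ * (‖T‖ * ‖x‖) + ‖S‖ * parallelogramArea a (T x)) := by
        gcongr
        refine (norm_map_le_add_opNorm_mul_parallelogramArea S ha.norm_eq_one (T x)).trans ?_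
        gcongr
        exact T.le_opNorm x
    _ = ‖T‖ ^ 2 * ‖S a‖ * ‖x‖ + ‖S‖ * (‖T‖ * parallelogramArea a (T x)) := by ring
    _ ≤ ‖T‖ ^ 2 * ‖S a‖ * ‖x‖ + ‖S‖ * (ω * ‖x‖) := by
        gcongr _ + _ * ?_
        exact ha.opNorm_mul_area_map_le hω x
    _ = (‖T‖ ^ 2 * ‖S a‖ + ‖S‖ * ω) * ‖x‖ := by ring

end IsLeadingDirection

end Area

section Dynamics

open Filter Asymptotics Topology
open scoped RealInnerProductSpace

theorem exists_norm_le_mul_norm_mul_of_isUnit {R : Type*} [NormedRing R] {g : R} (hg : IsUnit g) :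
    ∃ K, ∀ t : R, ‖t‖ ≤ K * ‖t * g‖ := by
  obtain ⟨u, rfl⟩ := hg
  refine ⟨‖(↑u⁻¹ : R)‖, fun t => ?_⟩
  calc ‖t‖ = ‖t * u * (↑u⁻¹ : R)‖ := by rw [Units.mul_inv_cancel_right]
    _ ≤ ‖(↑u⁻¹ : R)‖ * ‖t * u‖ := (norm_mul_le _ _).trans_eq (mul_comm _ _)

theorem ne_zero_of_isUnit_of_apply_eq_smul {𝕜 E : Type*} [NontriviallyNormedField 𝕜]
    [NormedAddCommGroup E] [NormedSpace 𝕜 E] {G : E →L[𝕜] E} {v : E} {c : 𝕜} (hG : IsUnit G)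
    (hv : v ≠ 0) (h : G v = c • v) : c ≠ 0 := by
  obtain ⟨u, rfl⟩ := hG
  rintro rfl
  have : ((↑u⁻¹ : E →L[𝕜] E) * u) v = 0 := by rw [mul_apply_eq_comp, h, zero_smul, map_zero]
  exact hv (by rwa [Units.inv_mul, one_apply_eq_self] at this)

variable {E : Type*} [NormedAddCommGroup E] [InnerProductSpace ℝ E] [Nontrivial E]
  {G : E →L[ℝ] E} {ω : ℕ → ℝ} {a : ℕ → E} {v : E}

theorem succ_sub_isBigO_of_isLeadingDirection_pow (hG : IsUnit G)
    (hω : ∀ᶠ n in atTop, IsAreaBound (G ^ n) (ω n)) (ha : ∀ n, IsLeadingDirection (G ^ n) (a n))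
    (hinner : ∀ n, 0 ≤ ⟪a n, a (n + 1)⟫) :
    (fun n => a (n + 1) - a n) =O[atTop] fun n => ω n / ‖G ^ n‖ ^ 2 := by
  obtain ⟨K, hK⟩ := exists_norm_le_mul_norm_mul_of_isUnit hG
  refine IsBigO.of_bound (2 * (K * ‖G‖)) (hω.mono fun n hωn => ?_)
  have hGn : 0 < ‖G ^ n‖ := norm_pos_iff.2 (hG.pow n).ne_zero
  have ha' : IsLeadingDirection (G ^ n * G) (a (n + 1)) := pow_succ G n ▸ ha (n + 1)
  have hK0 : 0 ≤ K := nonneg_of_mul_nonneg_left ((norm_nonneg _).trans (hK (G ^ n)))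
    (norm_pos_iff.2 (pow_succ G n ▸ (hG.pow (n + 1)).ne_zero))
  have area_le : parallelogramArea (a n) (a (n + 1)) ≤ K * ‖G‖ * (ω n / ‖G ^ n‖ ^ 2) := by
    rw [mul_div_assoc', le_div_iff₀ (by positivity)]
    calc parallelogramArea (a n) (a (n + 1)) * ‖G ^ n‖ ^ 2
        ≤ parallelogramArea (a n) (a (n + 1)) * (‖G ^ n‖ * (K * ‖G ^ n * G‖)) := by
          rw [sq]
          gcongr
          exacts [parallelogramArea_nonneg _ _, hK _]
      _ = K * (‖G ^ n‖ * ‖G ^ n * G‖ * parallelogramArea (a n) (a (n + 1))) := by ring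
      _ ≤ K * (ω n * ‖G‖) := by
          gcongr K * ?_
          exact (ha n).opNorm_mul_opNorm_mul_area_le hωn ha'
      _ = K * ‖G‖ * ω n := by ring
  rw [Real.norm_of_nonneg (div_nonneg hωn.nonneg (by positivity)), norm_sub_rev, mul_assoc]
  exact (norm_sub_le_two_mul_parallelogramArea (ha n).norm_eq_one (ha (n + 1)).norm_eq_one
    (hinner n)).trans (mul_le_mul_of_nonneg_left area_le two_pos.le)

theorem parallelogramArea_map_eq_zero_of_tendsto (hG : IsUnit G)
    (hω : ∀ᶠ n in atTop, IsAreaBound (G ^ n) (ω n)) (ha : ∀ n, IsLeadingDirection (G ^ n) (a n))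
    (hlim : Tendsto (fun n => ω n / ‖G ^ n‖ ^ 2) atTop (𝓝 0)) (hav : Tendsto a atTop (𝓝 v)) :
    parallelogramArea v (G v) = 0 := by
  have area_tendsto : Tendsto (fun n => parallelogramArea (a (n + 1)) (G (a n))) atTop
      (𝓝 (parallelogramArea v (G v))) :=
    tendsto_parallelogramArea (hav.comp (tendsto_add_atTop_nat 1))
      ((G.continuous.tendsto v).comp hav)
  have bound_tendsto : Tendsto (fun n => ‖G‖ * (ω (n + 1) / ‖G ^ (n + 1)‖ ^ 2)) atTop (𝓝 0) := by
    simpa using (hlim.comp (tendsto_add_atTop_nat 1)).const_mul ‖G‖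
  refine le_antisymm (le_of_tendsto_of_tendsto area_tendsto bound_tendsto ?_)
    (parallelogramArea_nonneg _ _)
  filter_upwards [(tendsto_add_atTop_nat 1).eventually hω] with n hωn
  have hGn : 0 < ‖G ^ (n + 1)‖ := norm_pos_iff.2 (hG.pow _).ne_zero
  rw [mul_div_assoc', le_div_iff₀ (by positivity)]
  rw [pow_succ' G] at hωn hGn ⊢
  calc parallelogramArea (a (n + 1)) (G (a n)) * ‖G * G ^ n‖ ^ 2
      ≤ parallelogramArea (a (n + 1)) (G (a n)) * (‖G‖ * ‖G ^ n‖ * ‖G * G ^ n‖) := by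
        rw [sq]
        gcongr
        exacts [parallelogramArea_nonneg _ _, norm_mul_le _ _]
    _ = ‖G‖ * (‖G ^ n‖ * ‖G * G ^ n‖ * parallelogramArea (a (n + 1)) (G (a n))) := by ring
    _ ≤ ‖G‖ * ω (n + 1) := by
        gcongr _ * ?_
        exact (ha n).opNorm_mul_opNorm_mul_area_map_le (pow_succ' G n ▸ ha (n + 1)) hωn

theorem opNorm_pow_isBigO_natCast_mul_abs_pow {c : ℝ} (hc : c ≠ 0) (hG : IsUnit G)
    (hω : ∀ᶠ n in atTop, IsAreaBound (G ^ n) (ω n)) (ha : ∀ n, IsLeadingDirection (G ^ n) (a n))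
    (hlim : (fun n => ω n / ‖G ^ n‖ ^ 2) =o[atTop] fun n : ℕ => (n : ℝ)⁻¹)
    (hav : (fun n => a n - v) =o[atTop] fun n : ℕ => (n : ℝ)⁻¹) (hv : ‖v‖ = 1) (hGv : G v = c • v) :
    (fun n => ‖G ^ n‖) =O[atTop] fun n : ℕ => (n : ℝ) * |c| ^ n := by
  have norm_map_le : ∀ n, ‖G (a n)‖ ≤ |c| + ‖G‖ * ‖a n - v‖ := fun n =>
    calc ‖G (a n)‖ = ‖G v + G (a n - v)‖ := by rw [← map_add, add_sub_cancel]
      _ ≤ |c| + ‖G‖ * ‖a n - v‖ := by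
          refine (norm_add_le _ _).trans (add_le_add ?_ (G.le_opNorm _))
          rw [hGv, norm_smul, hv, mul_one, Real.norm_eq_abs]
  refine isBigO_natCast_mul_pow_of_succ_le
    (e := fun n => ‖G‖ * ‖a n - v‖ + ‖G‖ * (ω n / ‖G ^ n‖ ^ 2))
    (abs_pos.2 hc) (fun n => norm_nonneg _) (hω.mono fun n hωn => ?_)
    ((hav.norm_left.const_mul_left _).add (hlim.const_mul_left _))
  have hGn : 0 < ‖G ^ n‖ := norm_pos_iff.2 (hG.pow n).ne_zero
  rw [pow_succ' G, ← mul_le_mul_iff_right₀ hGn]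
  calc ‖G ^ n‖ * ‖G * G ^ n‖ ≤ ‖G ^ n‖ ^ 2 * ‖G (a n)‖ + ‖G‖ * ω n :=
        (ha n).opNorm_mul_opNorm_mul_le hωn
    _ ≤ ‖G ^ n‖ ^ 2 * (|c| + ‖G‖ * ‖a n - v‖) + ‖G‖ * ω n := by
        gcongr
        exact norm_map_le n
    _ = ‖G ^ n‖ * (‖G ^ n‖ * (|c| + (‖G‖ * ‖a n - v‖ + ‖G‖ * (ω n / ‖G ^ n‖ ^ 2)))) := by
        field_simp
        ring

theorem exists_eigenvector_areaBound_isLittleO [FiniteDimensional ℝ E] (hG : IsUnit G)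
    (hω : ∀ᶠ n in atTop, IsAreaBound (G ^ n) (ω n))
    (hlim : (fun n => ω n / ‖G ^ n‖ ^ 2) =o[atTop] fun n : ℕ => ((n : ℝ) ^ 2)⁻¹) :
    ∃ (v : E) (c : ℝ), ‖v‖ = 1 ∧ c ≠ 0 ∧ G v = c • v ∧ ω =o[atTop] fun n => (|c| ^ n) ^ 2 := by
  obtain ⟨a, ha, hinner⟩ :=
    exists_isLeadingDirection_seq_inner_nonneg fun n => (hG.pow n).ne_zero
  obtain ⟨v, hav⟩ := exists_sub_isLittleO_inv_of_succ_sub_isLittleO_inv_sq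
    ((succ_sub_isBigO_of_isLeadingDirection_pow hG hω ha hinner).trans_isLittleO hlim)
  have inv_tendsto : Tendsto (fun n : ℕ => (n : ℝ)⁻¹) atTop (𝓝 0) := tendsto_inv_atTop_nhds_zero_nat
  have hlim' : (fun n => ω n / ‖G ^ n‖ ^ 2) =o[atTop] fun n : ℕ => (n : ℝ)⁻¹ :=
    hlim.trans_isBigO <| by
      simpa only [sq, mul_inv, mul_one] using
        (isBigO_refl _ _).mul (inv_tendsto.isBigO_one ℝ)
  have a_tendsto : Tendsto a atTop (𝓝 v) :=
    tendsto_sub_nhds_zero_iff.1 (hav.isBigO.trans_tendsto inv_tendsto)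
  have hv : ‖v‖ = 1 :=
    tendsto_nhds_unique a_tendsto.norm (by simp only [(ha _).norm_eq_one, tendsto_const_nhds])
  have hGv := eq_inner_smul_of_parallelogramArea_eq_zero hv
    (parallelogramArea_map_eq_zero_of_tendsto hG hω ha
      (hlim'.isBigO.trans_tendsto inv_tendsto) a_tendsto)
  have hc := ne_zero_of_isUnit_of_apply_eq_smul hG (norm_ne_zero_iff.1 (hv ▸ one_ne_zero)) hGv
  refine ⟨v, _, hv, hc, hGv, ?_⟩
  have growth := opNorm_pow_isBigO_natCast_mul_abs_pow hc hG hω ha hlim' hav hv hGv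
  refine (hlim.mul_isBigO (growth.pow 2)).congr' ?_ ?_
  · exact .of_forall fun n => div_mul_cancel₀ _
      (pow_ne_zero 2 (norm_ne_zero_iff.2 (hG.pow n).ne_zero))
  · filter_upwards [eventually_ne_atTop 0] with n hn
    have : (n : ℝ) ≠ 0 := Nat.cast_ne_zero.2 hn
    field_simp

end Dynamics

section Domination

open Filter Asymptotics Topology Module

-- Modulo `ker P` the map `T` has norm at most `q`, so `κ` is not an eigenvalue of it there.
theorem isCompl_ker_range_sub_smul {𝕜 E F : Type*} [NormedField 𝕜] [AddCommGroup E] [Module 𝕜 E]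
    [FiniteDimensional 𝕜 E] [NormedAddCommGroup F] [NormedSpace 𝕜 F] {P : E →ₗ[𝕜] F} {T : End 𝕜 E}
    {κ : 𝕜} {q : ℝ} (hker : ∀ x, P x = 0 → T x = κ • x) (hP : ∀ x, ‖P (T x)‖ ≤ q * ‖P x‖)
    (hq : q < ‖κ‖) : IsCompl (LinearMap.ker P) (LinearMap.range (T - κ • (1 : End 𝕜 E))) := by
  have mem_ker : ∀ x, P ((T - κ • (1 : End 𝕜 E)) x) = 0 → P x = 0 := fun x hx => by
    have hPx : P (T x) = κ • P x := by
      simpa [sub_eq_zero] using hx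
    have := hP x
    rw [hPx, norm_smul] at this
    by_contra hne
    exact this.not_gt (mul_lt_mul_of_pos_right hq (norm_pos_iff.2 hne))
  have ker_eq : LinearMap.ker (T - κ • (1 : End 𝕜 E)) = LinearMap.ker P := by
    refine le_antisymm (fun x hx => mem_ker x ?_) fun x hx => ?_
    · rw [LinearMap.mem_ker.1 hx, map_zero]
    · simp [hker x hx]
  refine (Submodule.isCompl_iff_disjoint _ _ ?_).2 (Submodule.disjoint_def.2 ?_)
  · rw [← ker_eq, add_comm, LinearMap.finrank_range_add_finrank_ker]
  · rintro _ hx ⟨y, rfl⟩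
    simp [hker y (mem_ker y hx)]

section NormedSpace

variable {𝕜 E F : Type*} [NontriviallyNormedField 𝕜] [NormedAddCommGroup E] [NormedSpace 𝕜 E]
  [NormedAddCommGroup F] [NormedSpace 𝕜 F]

theorem exists_norm_le_mul_norm_map_of_disjoint_ker [CompleteSpace 𝕜] [FiniteDimensional 𝕜 E]
    {P : E →ₗ[𝕜] F} {W : Submodule 𝕜 E} (h : Disjoint (LinearMap.ker P) W) :
    ∃ K, 0 < K ∧ ∀ x ∈ W, ‖x‖ ≤ K * ‖P x‖ := by
  have hker : LinearMap.ker (P.domRestrict W) = ⊥ := by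
    rw [LinearMap.ker_domRestrict, ← Submodule.disjoint_iff_comap_eq_bot]
    exact h.symm
  obtain ⟨K, hK, hanti⟩ := (P.domRestrict W).exists_antilipschitzWith hker
  exact ⟨K, hK, fun x hx => by simpa using hanti.le_mul_dist (⟨x, hx⟩ : W) 0⟩

theorem exists_norm_pow_apply_le_of_forall_pow_mul (G : E →L[𝕜] E) {n : ℕ} (hn : n ≠ 0)
    {ρ : ℝ} (hρ : 0 < ρ) :
    ∃ C, 0 < C ∧ ∀ (x : E) (B : ℝ), (∀ j, ‖(G ^ (n * j)) x‖ ≤ B * ρ ^ (n * j)) →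
      ∀ m, ‖(G ^ m) x‖ ≤ C * B * ρ ^ m := by
  refine ⟨∑ r ∈ Finset.range n, ‖G ^ r‖ / ρ ^ r + 1, by positivity, fun x B hB m => ?_⟩
  have hB0 : 0 ≤ B := by simpa using (norm_nonneg _).trans (hB 0)
  have remainder_le : ‖G ^ (m % n)‖ / ρ ^ (m % n) ≤
      ∑ r ∈ Finset.range n, ‖G ^ r‖ / ρ ^ r + 1 :=
    (Finset.single_le_sum (f := fun r => ‖G ^ r‖ / ρ ^ r) (fun _ _ => by positivity)
      (Finset.mem_range.2 (Nat.mod_lt m (Nat.pos_of_ne_zero hn)))).trans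
      (le_add_of_nonneg_right zero_le_one)
  calc ‖(G ^ m) x‖ = ‖(G ^ (m % n)) ((G ^ (n * (m / n))) x)‖ := by
        rw [← mul_apply_eq_comp, ← pow_add, Nat.mod_add_div]
    _ ≤ ‖G ^ (m % n)‖ * (B * ρ ^ (n * (m / n))) :=
        (ContinuousLinearMap.le_opNorm _ _).trans (by gcongr; exact hB _)
    _ = ‖G ^ (m % n)‖ / ρ ^ (m % n) * B * ρ ^ m := by
        conv_rhs => rw [← Nat.mod_add_div m n, pow_add]
        rw [Nat.mod_add_div]
        field_simp
    _ ≤ _ := by gcongr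

theorem pow_apply_eq_pow_smul {G : E →L[𝕜] E} {v : E} {c : 𝕜} (h : G v = c • v) (n : ℕ) :
    (G ^ n) v = c ^ n • v := by
  induction n with
  | zero => simp
  | succ n ih => rw [pow_succ, mul_apply_eq_comp, h, map_smul, ih, smul_smul, ← pow_succ']

theorem norm_pow_le_opNorm_pow {G : E →L[𝕜] E} {v : E} {c : 𝕜} (hv : v ≠ 0) (h : G v = c • v)
    (n : ℕ) : ‖c‖ ^ n ≤ ‖G ^ n‖ := by
  have := (G ^ n).le_opNorm v
  rw [pow_apply_eq_pow_smul h, norm_smul, norm_pow] at this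
  exact le_of_mul_le_mul_right this (norm_pos_iff.2 hv)

theorem norm_apply_pow_apply_le {P : E →L[𝕜] F} {T : E →L[𝕜] E} {q : ℝ} (hq : 0 ≤ q)
    (h : ∀ x, ‖P (T x)‖ ≤ q * ‖P x‖) (j : ℕ) (x : E) : ‖P ((T ^ j) x)‖ ≤ q ^ j * ‖P x‖ := by
  induction j with
  | zero => simp
  | succ j ih =>
    rw [pow_succ', mul_apply_eq_comp, pow_succ', mul_assoc]
    exact (h _).trans (mul_le_mul_of_nonneg_left ih hq)

end NormedSpace

/-- Proximality of `G` in `P(E)`: there is an eigenline of `G` with an invariant complement `W` that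
it dominates, `Gⁿ` growing on `W` at an exponential rate `ρ` strictly below the modulus of the
eigenvalue. -/
def HasDominatedEigenline {E : Type*} [NormedAddCommGroup E] [NormedSpace ℝ E]
    (G : E →L[ℝ] E) : Prop :=
  ∃ (v : E) (c : ℝ) (W : Submodule ℝ E) (ρ C₀ : ℝ),
    v ≠ 0 ∧ G v = c • v ∧ (∀ x ∈ W, G x ∈ W) ∧ IsCompl (ℝ ∙ v) W ∧
    0 ≤ ρ ∧ ρ < |c| ∧ 0 < C₀ ∧ ∀ x ∈ W, ∀ n : ℕ, ‖(G ^ n) x‖ ≤ C₀ * ρ ^ n * ‖x‖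

theorem hasDominatedEigenline_of_contraction {E F : Type*} [NormedAddCommGroup E]
    [NormedSpace ℝ E] [FiniteDimensional ℝ E] [NormedAddCommGroup F] [NormedSpace ℝ F]
    {G : E →L[ℝ] E} {P : E →L[ℝ] F} {v : E} {c ρ : ℝ} {n : ℕ} (hv : v ≠ 0) (hGv : G v = c • v)
    (hker : LinearMap.ker (P : E →ₗ[ℝ] F) = ℝ ∙ v) (hn : n ≠ 0) (hρ : 0 < ρ) (hρc : ρ < |c|)
    (hP : ∀ x, ‖P ((G ^ n) x)‖ ≤ ρ ^ n * ‖P x‖) :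
    HasDominatedEigenline G := by
  have eigen : ∀ x, P x = 0 → (G ^ n) x = c ^ n • x := fun x hx => by
    obtain ⟨r, rfl⟩ := Submodule.mem_span_singleton.1 (hker ▸ LinearMap.mem_ker.2 hx)
    rw [map_smul, pow_apply_eq_pow_smul hGv, smul_comm]
  have hcompl := isCompl_ker_range_sub_smul (P := (P : E →ₗ[ℝ] F)) (T := ↑(G ^ n)) eigen hP
    (by rw [norm_pow]; exact pow_lt_pow_left₀ hρc hρ.le hn)
  set W := LinearMap.range (((G ^ n : E →L[ℝ] E) : End ℝ E) - c ^ n • (1 : End ℝ E))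
  have invariant : ∀ x ∈ W, G x ∈ W := by
    rintro _ ⟨y, rfl⟩
    have comm : (G ^ n) (G y) = G ((G ^ n) y) := by
      rw [← mul_apply_eq_comp, ← mul_apply_eq_comp, ← pow_succ, ← pow_succ']
    refine ⟨G y, ?_⟩
    change (G ^ n) (G y) - c ^ n • G y = G ((G ^ n) y - c ^ n • y)
    rw [map_sub, map_smul, comm]
  obtain ⟨K, hK0, hK⟩ := exists_norm_le_mul_norm_map_of_disjoint_ker hcompl.disjoint
  obtain ⟨M, hM0, hM⟩ := P.bound
  obtain ⟨C, hC0, hC⟩ := exists_norm_pow_apply_le_of_forall_pow_mul G hn hρ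
  refine ⟨v, c, W, ρ, C * (K * M), hv, hGv, invariant, hker ▸ hcompl, hρ.le, hρc, by positivity,
    fun x hx m => ?_⟩
  have pow_le : ∀ j, ‖(G ^ (n * j)) x‖ ≤ K * ‖P x‖ * ρ ^ (n * j) := fun j => by
    have hmem : (G ^ (n * j)) x ∈ W := by
      rw [FunLike.coe_pow_eq_iterate]
      exact Set.MapsTo.iterate invariant (n * j) hx
    calc ‖(G ^ (n * j)) x‖ ≤ K * ‖P (((G ^ n) ^ j) x)‖ := pow_mul G n j ▸ hK _ hmem
      _ ≤ K * ((ρ ^ n) ^ j * ‖P x‖) := by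
          gcongr
          exact norm_apply_pow_apply_le (by positivity) hP j x
      _ = K * ‖P x‖ * ρ ^ (n * j) := by rw [pow_mul]; ring
  calc ‖(G ^ m) x‖ ≤ C * (K * ‖P x‖) * ρ ^ m := hC x _ pow_le m
    _ ≤ C * (K * (M * ‖x‖)) * ρ ^ m := by gcongr; exact hM x
    _ = C * (K * M) * ρ ^ m * ‖x‖ := by ring

theorem exists_pos_lt_lt_pow {q c : ℝ} {n : ℕ} (hc : 0 < c) (h : q < c ^ n) :
    ∃ ρ, 0 < ρ ∧ ρ < c ∧ q < ρ ^ n := by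
  have near : ∀ᶠ ρ in 𝓝[<] c, q < ρ ^ n :=
    ((continuous_pow n).tendsto c).mono_left nhdsWithin_le_nhds |>.eventually_const_lt h
  obtain ⟨ρ, hq, hρ⟩ := (near.and (Ioo_mem_nhdsLT hc)).exists
  exact ⟨ρ, hρ.1, hρ.2, hq⟩

theorem hasDominatedEigenline_of_isAreaBound_pow {E : Type*} [NormedAddCommGroup E]
    [InnerProductSpace ℝ E] [FiniteDimensional ℝ E] {G : E →L[ℝ] E} {v : E} {c ω : ℝ} {n : ℕ}
    (hv : ‖v‖ = 1) (hGv : G v = c • v) (hn : n ≠ 0) (hω : IsAreaBound (G ^ n) ω)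
    (hlt : ω < (|c| ^ n) ^ 2) : HasDominatedEigenline G := by
  have hc : 0 < |c| := abs_pos.2 fun hc =>
    hω.nonneg.not_gt (by simpa [hc, hn] using hlt)
  have hcn : 0 < |c| ^ n := pow_pos hc n
  obtain ⟨ρ, hρ0, hρc, hq⟩ := exists_pos_lt_lt_pow (q := ω / |c| ^ n) hc
    ((div_lt_iff₀ hcn).2 (by rwa [← sq]))
  have hv0 : v ≠ 0 := norm_ne_zero_iff.1 (by rw [hv]; exact one_ne_zero)
  refine hasDominatedEigenline_of_contraction (P := (ℝ ∙ v)ᗮ.starProjection) hv0 hGv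
    (by simp) hn hρ0 hρc fun x => ?_
  rw [← parallelogramArea_eq_norm_starProjection hv, ← parallelogramArea_eq_norm_starProjection hv]
  calc parallelogramArea v ((G ^ n) x)
      = parallelogramArea ((G ^ n) v) ((G ^ n) x) / |c| ^ n := by
        rw [pow_apply_eq_pow_smul hGv, parallelogramArea_smul_left, abs_pow,
          mul_div_cancel_left₀ _ hcn.ne']
    _ ≤ ω * parallelogramArea v x / |c| ^ n := by
        gcongr
        exact hω.area_map_le v x
    _ = ω / |c| ^ n * parallelogramArea v x := by ring
    _ ≤ ρ ^ n * parallelogramArea v x := by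
        gcongr
        exact parallelogramArea_nonneg v x

theorem hasDominatedEigenline_of_isLittleO {E : Type*} [NormedAddCommGroup E]
    [InnerProductSpace ℝ E] [FiniteDimensional ℝ E] [Nontrivial E] {G : E →L[ℝ] E} {ω : ℕ → ℝ}
    (hG : IsUnit G) (hω : ∀ᶠ n in atTop, IsAreaBound (G ^ n) (ω n))
    (hlim : (fun n => ω n / ‖G ^ n‖ ^ 2) =o[atTop] fun n : ℕ => ((n : ℝ) ^ 2)⁻¹) :
    HasDominatedEigenline G := by
  obtain ⟨v, c, hv, hc, hGv, hωc⟩ := exists_eigenvector_areaBound_isLittleO hG hω hlim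
  obtain ⟨n, hωn, hle, hn⟩ :=
    (hω.and ((isLittleO_iff.1 hωc one_half_pos).and (eventually_ne_atTop 0))).exists
  have hlt : ω n < (|c| ^ n) ^ 2 := by
    have hpos : 0 < (|c| ^ n) ^ 2 := by positivity
    rw [Real.norm_of_nonneg hωn.nonneg, Real.norm_of_nonneg hpos.le] at hle
    exact hle.trans_lt (mul_lt_of_lt_one_left hpos one_half_lt_one)
  exact hasDominatedEigenline_of_isAreaBound_pow hv hGv hn hωn hlt

end Domination

section SingularValues

open Module Filter Asymptotics
open scoped Matrix.Norms.L2Operator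

variable {ι : Type*} [Fintype ι]

theorem parallelogramArea_sq_eq_sum (x y : EuclideanSpace ℝ ι) :
    parallelogramArea x y ^ 2 = (∑ i, ∑ j, (x i * y j - x j * y i) ^ 2) / 2 := by
  have expand : ∀ i j, (x i * y j - x j * y i) ^ 2 =
      x i ^ 2 * y j ^ 2 + y i ^ 2 * x j ^ 2 - 2 * ((x i * y i) * (x j * y j)) := fun i j => by ring
  simp only [expand, Finset.sum_sub_distrib, Finset.sum_add_distrib, ← Finset.mul_sum,
    ← Finset.sum_mul]
  rw [parallelogramArea_sq, EuclideanSpace.real_norm_sq_eq, EuclideanSpace.real_norm_sq_eq,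
    PiLp.inner_apply]
  simp only [RCLike.inner_apply, conj_trivial, mul_comm (y _)]
  ring

variable [DecidableEq ι]

theorem isAreaBound_diagonal {α : ι → ℝ} {ω : ℝ} (hω : 0 ≤ ω)
    (h : ∀ i j, i ≠ j → |α i * α j| ≤ ω) :
    IsAreaBound (toEuclideanCLM (𝕜 := ℝ) (diagonal α)) ω where
  nonneg := hω
  area_map_le x y := by
    rw [← sq_le_sq₀ (parallelogramArea_nonneg _ _) (mul_nonneg hω (parallelogramArea_nonneg x y)),
      mul_pow, parallelogramArea_sq_eq_sum, parallelogramArea_sq_eq_sum, mul_div_assoc',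
      Finset.mul_sum]
    gcongr with i
    rw [Finset.mul_sum]
    gcongr with j
    simp only [ofLp_toEuclideanCLM, mulVec_diagonal]
    rcases eq_or_ne i j with rfl | hij
    · simp
    calc (α i * x i * (α j * y j) - α j * x j * (α i * y i)) ^ 2
        = |α i * α j| ^ 2 * (x i * y j - x j * y i) ^ 2 := by rw [sq_abs]; ring
      _ ≤ ω ^ 2 * (x i * y j - x j * y i) ^ 2 := by gcongr; exact h i j hij

theorem toEuclideanCLM_mem_unitary {k : Matrix ι ι ℝ} (hk : k * kᵀ = 1) :
    toEuclideanCLM (𝕜 := ℝ) k ∈ unitary (EuclideanSpace ℝ ι →L[ℝ] EuclideanSpace ℝ ι) :=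
  Unitary.map_mem _ ((mem_orthogonalGroup_iff ι ℝ).2 hk)

theorem mul_norm_le_norm_diagonal_apply {α : ι → ℝ} {r : ℝ} (hr : 0 ≤ r) {y : EuclideanSpace ℝ ι}
    (h : ∀ j, y j = 0 ∨ r ≤ α j) : r * ‖y‖ ≤ ‖toEuclideanCLM (𝕜 := ℝ) (diagonal α) y‖ := by
  rw [← sq_le_sq₀ (by positivity) (norm_nonneg _), mul_pow, EuclideanSpace.real_norm_sq_eq,
    EuclideanSpace.real_norm_sq_eq, Finset.mul_sum]
  gcongr with j
  rw [ofLp_toEuclideanCLM, mulVec_diagonal, mul_pow]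
  rcases h j with hj | hj
  · simp [hj]
  · gcongr

namespace IsSVD

variable {d : ℕ} {g k k' : Matrix (Fin d) (Fin d) ℝ} {α : Fin d → ℝ}

theorem toEuclideanCLM_eq (h : IsSVD g k α k') : toEuclideanCLM (𝕜 := ℝ) g =
    toEuclideanCLM (𝕜 := ℝ) k * toEuclideanCLM (𝕜 := ℝ) (diagonal α) *
      toEuclideanCLM (𝕜 := ℝ) k' := by
  obtain ⟨-, -, -, -, rfl⟩ := h
  rw [map_mul, map_mul]

theorem isAreaBound (h : IsSVD g k α k') (hd : 1 < d) :
    IsAreaBound (toEuclideanCLM (𝕜 := ℝ) g) (α ⟨0, by omega⟩ * α ⟨1, hd⟩) := by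
  obtain ⟨hk, hk', hα, hanti, -⟩ := id h
  have diag_bound : ∀ i j, i < j → α i * α j ≤ α ⟨0, by omega⟩ * α ⟨1, hd⟩ := fun i j hij =>
    mul_le_mul (hanti (Fin.mk_le_of_le_val (Nat.zero_le _)))
      (hanti (Fin.mk_le_of_le_val (by omega))) (hα j).le (hα _).le
  have diag := isAreaBound_diagonal (mul_pos (hα ⟨0, by omega⟩) (hα ⟨1, hd⟩)).le
    fun i j hij => by
      rw [abs_of_pos (mul_pos (hα i) (hα j))]
      rcases hij.lt_or_gt with hij | hij
      · exact diag_bound i j hij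
      · exact mul_comm (α i) _ ▸ diag_bound j i hij
  rw [h.toEuclideanCLM_eq]
  simpa using ((isAreaBound_one_of_mem_unitary (toEuclideanCLM_mem_unitary hk)).mul diag).mul
    (isAreaBound_one_of_mem_unitary (toEuclideanCLM_mem_unitary hk'))

theorem opNorm_eq (h : IsSVD g k α k') (hd : 0 < d) :
    ‖toEuclideanCLM (𝕜 := ℝ) g‖ = α ⟨0, hd⟩ := by
  obtain ⟨hk, hk', hα, hanti, rfl⟩ := h
  rw [l2_opNorm_toEuclideanCLM,
    CStarRing.norm_mul_mem_unitary _ ((mem_orthogonalGroup_iff _ ℝ).2 hk'),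
    CStarRing.norm_mem_unitary_mul _ ((mem_orthogonalGroup_iff _ ℝ).2 hk), l2_opNorm_diagonal]
  refine le_antisymm ((pi_norm_le_iff_of_nonneg (hα _).le).2 fun i => ?_)
    ((Real.le_norm_self _).trans (norm_le_pi_norm α _))
  rw [Real.norm_of_nonneg (hα i).le]
  exact hanti (Fin.mk_le_of_le_val (Nat.zero_le _))

theorem le_of_forall_norm_map_le (h : IsSVD g k α k') {W : Submodule ℝ (EuclideanSpace ℝ (Fin d))}
    (i : Fin d) (hW : d ≤ finrank ℝ W + i) {R : ℝ}
    (hR : ∀ x ∈ W, ‖toEuclideanCLM (𝕜 := ℝ) g x‖ ≤ R * ‖x‖) : α i ≤ R := by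
  obtain ⟨hk, hk', hα, hanti, -⟩ := id h
  have hU := ContinuousLinearMap.norm_map_of_mem_unitary (toEuclideanCLM_mem_unitary hk)
  have hU' := ContinuousLinearMap.norm_map_of_mem_unitary (toEuclideanCLM_mem_unitary hk')
  let tail : EuclideanSpace ℝ (Fin d) →ₗ[ℝ] (Finset.Ioi i → ℝ) :=
    LinearMap.pi fun j => (EuclideanSpace.proj (j : Fin d) : _ →L[ℝ] ℝ).toLinearMap ∘ₗ
      (toEuclideanCLM (𝕜 := ℝ) k').toLinearMap
  obtain ⟨⟨x, hxW⟩, hx, hx0⟩ := Submodule.exists_mem_ne_zero_of_ne_bot <|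
    LinearMap.ker_ne_bot_of_finrank_lt (f := tail.domRestrict W) (by
      rw [finrank_fintype_fun_eq_card, Fintype.card_coe, Fin.card_Ioi]
      omega)
  have hx0 : 0 < ‖x‖ := norm_pos_iff.2 fun h => hx0 (Subtype.ext h)
  have tail_zero : ∀ j > i, toEuclideanCLM (𝕜 := ℝ) k' x j = 0 := fun j hj =>
    congrFun hx ⟨j, Finset.mem_Ioi.2 hj⟩
  refine le_of_mul_le_mul_right ?_ hx0
  calc α i * ‖x‖ = α i * ‖toEuclideanCLM (𝕜 := ℝ) k' x‖ := by rw [hU']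
    _ ≤ ‖toEuclideanCLM (𝕜 := ℝ) (diagonal α) (toEuclideanCLM (𝕜 := ℝ) k' x)‖ :=
        mul_norm_le_norm_diagonal_apply (hα i).le fun j =>
          (lt_or_ge i j).imp (tail_zero j) fun hj => hanti hj
    _ = ‖toEuclideanCLM (𝕜 := ℝ) g x‖ := by
        rw [h.toEuclideanCLM_eq, mul_apply_eq_comp, mul_apply_eq_comp, hU]
    _ ≤ R * ‖x‖ := hR x hxW

end IsSVD

section Powers

variable {d : ℕ} {g : Matrix (Fin d) (Fin d) ℝ} {k k' : ℕ → Matrix (Fin d) (Fin d) ℝ}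
  {α : ℕ → Fin d → ℝ}

theorem HasDominatedEigenline.singularValue_div_isLittleO
    (hG : HasDominatedEigenline (toEuclideanCLM (𝕜 := ℝ) g)) (hd : 1 < d)
    (hsvd : ∀ n : ℕ, 1 ≤ n → IsSVD (g ^ n) (k n) (α n) (k' n)) :
    (fun n => α n ⟨1, hd⟩ / α n ⟨0, by omega⟩) =o[atTop] fun n : ℕ => ((n : ℝ) ^ 2)⁻¹ := by
  obtain ⟨v, c, W, ρ, C₀, hv, hGv, -, hcompl, hρ, hρc, hC₀, hW⟩ := hG
  have hc : 0 < |c| := hρ.trans_lt hρc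
  have finrank_W : 1 + finrank ℝ W = d := by
    simpa [finrank_span_singleton hv] using Submodule.finrank_add_eq_of_isCompl hcompl
  have ratio_isBigO : (fun n => α n ⟨1, hd⟩ / α n ⟨0, by omega⟩) =O[atTop]
      fun n : ℕ => (ρ / |c|) ^ n := by
    refine IsBigO.of_bound C₀ ((eventually_ge_atTop 1).mono fun n hn => ?_)
    have hα := (hsvd n hn).2.2.1
    have le_second : α n ⟨1, hd⟩ ≤ C₀ * ρ ^ n :=
      (hsvd n hn).le_of_forall_norm_map_le (W := W) ⟨1, hd⟩ (by simp only; omega)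
        fun x hx => by
          rw [map_pow]
          exact hW x hx n
    have first_le : |c| ^ n ≤ α n ⟨0, by omega⟩ := by
      rw [← (hsvd n hn).opNorm_eq, map_pow]
      exact norm_pow_le_opNorm_pow hv hGv n
    rw [Real.norm_of_nonneg (div_pos (hα _) (hα _)).le, Real.norm_of_nonneg (by positivity),
      div_pow, mul_div_assoc']
    gcongr
  refine ratio_isBigO.trans_isLittleO (pow_isLittleO_inv_sq ?_)
  rw [abs_of_nonneg (by positivity)]
  exact (div_lt_one hc).2 hρc

theorem hasDominatedEigenline_of_singularValue_div_isLittleO (hd : 1 < d) (hg : IsUnit g.det)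
    (hsvd : ∀ n : ℕ, 1 ≤ n → IsSVD (g ^ n) (k n) (α n) (k' n))
    (hlim : (fun n => α n ⟨1, hd⟩ / α n ⟨0, by omega⟩) =o[atTop]
      fun n : ℕ => ((n : ℝ) ^ 2)⁻¹) :
    HasDominatedEigenline (toEuclideanCLM (𝕜 := ℝ) g) := by
  have : Nontrivial (Fin d) := Fin.nontrivial_iff_two_le.2 hd
  have hG : IsUnit (toEuclideanCLM (𝕜 := ℝ) g) := ((isUnit_iff_isUnit_det g).2 hg).map _
  refine hasDominatedEigenline_of_isLittleO (ω := fun n => α n ⟨0, by omega⟩ * α n ⟨1, hd⟩)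
    hG ((eventually_ge_atTop 1).mono fun n hn => by
      rw [← map_pow]
      exact (hsvd n hn).isAreaBound hd)
    (hlim.congr' ((eventually_ge_atTop 1).mono fun n hn => ?_) .rfl)
  have := ((hsvd n hn).2.2.1 ⟨0, by omega⟩).ne'
  simp only [← map_pow, (hsvd n hn).opNorm_eq (show 0 < d by omega)]
  field_simp

end Powers

end SingularValues

/-- `g ∈ GL(d,ℝ)` is proximal in `P(ℝ^d)` (there is an eigenline `ℝv` with a dominated
`g`-invariant complement `W`) if and only if
`log(α(n) 0) − log(α(n) 1) − 2 log n → +∞`, where `α(n)` are the singular values of `gⁿ`. -/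
theorem stmt2 (d : ℕ) (hd : 2 ≤ d) (g : Matrix (Fin d) (Fin d) ℝ) (hg : IsUnit g.det)
    (k : ℕ → Matrix (Fin d) (Fin d) ℝ) (α : ℕ → Fin d → ℝ)
    (k' : ℕ → Matrix (Fin d) (Fin d) ℝ)
    (hsvd : ∀ n : ℕ, 1 ≤ n → IsSVD (g ^ n) (k n) (α n) (k' n)) :
    (∃ (v : EuclideanSpace ℝ (Fin d)) (c : ℝ)
        (W : Submodule ℝ (EuclideanSpace ℝ (Fin d))) (ρ C₀ : ℝ),
      v ≠ 0 ∧ appE g v = c • v ∧ (∀ x ∈ W, appE g x ∈ W) ∧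
      IsCompl (Submodule.span ℝ {v}) W ∧
      0 ≤ ρ ∧ ρ < |c| ∧ 0 < C₀ ∧
      ∀ x ∈ W, ∀ n : ℕ, ‖appE (g ^ n) x‖ ≤ C₀ * ρ ^ n * ‖x‖) ↔
    Filter.Tendsto
      (fun n : ℕ => Real.log (α n ⟨0, by omega⟩) - Real.log (α n ⟨1, by omega⟩)
        - 2 * Real.log n)
      Filter.atTop Filter.atTop := by
  have appE_pow : ∀ n x, appE (g ^ n) x = (toEuclideanCLM (𝕜 := ℝ) g ^ n) x := fun n x => by
    rw [← map_pow]
    rfl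
  have singularValue_pos : ∀ i, ∀ᶠ n in Filter.atTop, 0 < α n i := fun i =>
    (Filter.eventually_ge_atTop 1).mono fun n hn => (hsvd n hn).2.2.1 i
  rw [tendsto_log_sub_log_sub_two_mul_log_iff (singularValue_pos _) (singularValue_pos _)]
  simp only [appE_pow]
  exact ⟨fun h => HasDominatedEigenline.singularValue_div_isLittleO h hd hsvd,
    hasDominatedEigenline_of_singularValue_div_isLittleO hd hg hsvd⟩
end

section
/- Let d ≥ 2 and let u ∈ GL(d,ℝ) be unipotent, i.e. (u − 1)^d = 0. Then there exists a constant C ≥ 1 such that for every integer n ≥ 1, every singular value decomposition uⁿ = k·diag(α)·k', and every index i ∈ Fin d such that i+1 is also a valid index: α i / α (i+1) ≤ C·n². -/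
/-!
Let `X = ⋀ᵖ u` with `p = i + 1`. The two largest singular values of `Xⁿ` are `σ₁ = α₀ ⋯ αᵢ` and
`σ₂ = σ₁ αᵢ₊₁ / αᵢ`, so it suffices to bound `σ₁ / σ₂` by `O(n²)`. The entries of `Xⁿ` are minors of
`uⁿ`, hence polynomials in `n`; let `P` be one of maximal degree `m + 1` (if all are constant, then
`Xⁿ = 1`). Then `σ₁ = ‖Xⁿ‖ = O(n^(m + 1))`. On the other hand `P(n) P(n + 2) - P(n + 1)²` is a
polynomial of degree exactly `2m`, and it is the determinant of a `2 × 2` matrix `A Xⁿ B` with `A`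
and `B` independent of `n`, hence it is `O(σ₁ σ₂)`. Therefore
`σ₁ / σ₂ = σ₁² / (σ₁ σ₂) = O(n^(2m + 2) / n^(2m)) = O(n²)`. The finitely many `n` this leaves out
are covered by the bound `‖uⁿ‖ ‖u⁻ⁿ‖` on the ratio of any two singular values.
-/

open Matrix

open Polynomial Filter Asymptotics
open scoped Finset

section Polynomial

variable {R : Type*} [CommRing R]

/-- The forward difference `P(X + 1) - P(X)` of a polynomial. -/
noncomputable def polyFwdDiff (P : R[X]) : R[X] := taylor 1 P - P

/-- The polynomial whose value at `x` is the `2 × 2` Hankel determinant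
`P(x) P(x + 2) - P(x + 1)²`, written in terms of differences to make the cancellation of its
leading terms visible. -/
noncomputable def hankelPoly (P : R[X]) : R[X] :=
  P * polyFwdDiff (polyFwdDiff P) - polyFwdDiff P ^ 2

lemma eval_polyFwdDiff (P : R[X]) (x : R) :
    (polyFwdDiff P).eval x = P.eval (x + 1) - P.eval x := by
  rw [polyFwdDiff, eval_sub, taylor_eval]

lemma eval_hankelPoly (P : R[X]) (x : R) :
    (hankelPoly P).eval x = P.eval x * P.eval (x + 2) - P.eval (x + 1) ^ 2 := by
  rw [← one_add_one_eq_two, ← add_assoc]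
  simp only [hankelPoly, eval_sub, eval_mul, eval_pow, eval_polyFwdDiff]
  ring

lemma coeff_taylor_one_of_natDegree_le {P : R[X]} {k : ℕ} (hP : P.natDegree ≤ k + 1) :
    (taylor 1 P).coeff k = P.coeff k + (k + 1) * P.coeff (k + 1) := by
  have hdeg : (hasseDeriv k P).natDegree < 2 := by
    have := natDegree_hasseDeriv_le P k
    omega
  rw [taylor_coeff, eval_eq_sum_range' hdeg]
  simp [Finset.sum_range_succ, hasseDeriv_coeff, add_comm 1 k]

lemma coeff_polyFwdDiff {P : R[X]} {m : ℕ} (hP : P.natDegree ≤ m + 1) :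
    (polyFwdDiff P).coeff m = (m + 1) * P.coeff (m + 1) := by
  rw [polyFwdDiff, coeff_sub, coeff_taylor_one_of_natDegree_le hP, add_sub_cancel_left]

lemma natDegree_polyFwdDiff_le {P : R[X]} {m : ℕ} (hP : P.natDegree ≤ m + 1) :
    (polyFwdDiff P).natDegree ≤ m := by
  refine natDegree_le_iff_coeff_eq_zero.2 fun k hk => ?_
  rw [coeff_polyFwdDiff (by omega), coeff_eq_zero_of_natDegree_lt (by omega), mul_zero]

lemma polyFwdDiff_eq_zero_of_natDegree_eq_zero {P : R[X]} (hP : P.natDegree = 0) :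
    polyFwdDiff P = 0 := by
  rw [eq_C_of_natDegree_eq_zero hP, polyFwdDiff, taylor_C, sub_self]

lemma coeff_hankelPoly {P : R[X]} {m : ℕ} (hP : P.natDegree ≤ m + 1) :
    (hankelPoly P).coeff (2 * m) = -((m + 1) * P.coeff (m + 1) ^ 2) := by
  have hdiff := natDegree_polyFwdDiff_le hP
  have hsq : (polyFwdDiff P ^ 2).coeff (2 * m) = ((m + 1) * P.coeff (m + 1)) ^ 2 := by
    rw [coeff_pow_of_natDegree_le hdiff, coeff_polyFwdDiff hP]
  have hprod : (P * polyFwdDiff (polyFwdDiff P)).coeff (2 * m)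
      = m * (m + 1) * P.coeff (m + 1) ^ 2 := by
    rcases m with _ | m
    · simp [polyFwdDiff_eq_zero_of_natDegree_eq_zero (Nat.le_zero.1 hdiff)]
    · rw [show 2 * (m + 1) = m + 1 + 1 + m by ring,
        coeff_mul_add_eq_of_natDegree_le hP (natDegree_polyFwdDiff_le hdiff),
        coeff_polyFwdDiff hdiff, coeff_polyFwdDiff hP]
      push_cast
      ring
  rw [hankelPoly, coeff_sub, hprod, hsq]
  ring

lemma two_mul_le_degree_hankelPoly [IsDomain R] [CharZero R] {P : R[X]} {m : ℕ}
    (hP : P.natDegree = m + 1) : ((2 * m : ℕ) : WithBot ℕ) ≤ (hankelPoly P).degree := by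
  have hlead : P.coeff (m + 1) ≠ 0 := by
    rw [← hP, coeff_natDegree, leadingCoeff_ne_zero]
    rintro rfl
    simp at hP
  refine le_degree_of_ne_zero ?_
  rw [coeff_hankelPoly hP.le]
  exact neg_ne_zero.2 (mul_ne_zero m.cast_add_one_ne_zero (pow_ne_zero 2 hlead))

end Polynomial

section Unipotent

lemma one_add_pow_eq_sum_of_pow_eq_zero {R : Type*} [Semiring R] {x : R} {d : ℕ}
    (hx : x ^ d = 0) (n : ℕ) : (1 + x) ^ n = ∑ k ∈ Finset.range d, n.choose k • x ^ k := by
  have hpow : ∀ k ≥ d, n.choose k • x ^ k = 0 := fun k hk => by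
    rw [pow_eq_zero_of_le hk hx, smul_zero]
  have hchoose : ∀ k ≥ n + 1, n.choose k • x ^ k = 0 := fun k hk => by
    rw [Nat.choose_eq_zero_of_lt hk, zero_smul]
  calc (1 + x) ^ n = ∑ k ∈ Finset.range (n + 1), n.choose k • x ^ k := by
        simp only [add_comm 1 x, (Commute.one_right x).add_pow, one_pow, mul_one, nsmul_eq_mul']
    _ = ∑ k ∈ Finset.range (n + 1 + d), n.choose k • x ^ k :=
        (Finset.eventually_constant_sum hchoose (by omega)).symm
    _ = ∑ k ∈ Finset.range d, n.choose k • x ^ k :=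
        Finset.eventually_constant_sum hpow (by omega)

lemma exists_pow_eq_map_eval {ι 𝕜 : Type*} [Fintype ι] [DecidableEq ι] [Field 𝕜] [CharZero 𝕜]
    {u : Matrix ι ι 𝕜} {d : ℕ} (hu : (u - 1) ^ d = 0) :
    ∃ Q : Matrix ι ι 𝕜[X], ∀ n : ℕ, u ^ n = Q.map (eval (n : 𝕜)) := by
  let binom (k : ℕ) : 𝕜[X] := C (k.factorial : 𝕜)⁻¹ * descPochhammer 𝕜 k
  have hbinom : ∀ n k : ℕ, (binom k).eval (n : 𝕜) = n.choose k := fun n k => by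
    rw [eval_mul, eval_C, Nat.cast_choose_eq_descPochhammer_div, div_eq_inv_mul]
  refine ⟨∑ k ∈ Finset.range d, binom k • ((u - 1) ^ k).map C, fun n => ?_⟩
  have hsum := one_add_pow_eq_sum_of_pow_eq_zero hu n
  rw [add_sub_cancel] at hsum
  ext i j
  simp only [hsum, Matrix.sum_apply, Matrix.smul_apply, map_apply, eval_finsetSum, eval_mul,
    eval_C, smul_eq_mul, hbinom]
  simp only [nsmul_eq_mul]

lemma isUnit_of_sub_one_pow_eq_zero {R : Type*} [Ring R] {u : R} {d : ℕ}
    (hu : (u - 1) ^ d = 0) : IsUnit u := by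
  simpa using IsNilpotent.isUnit_one_add ⟨d, hu⟩

end Unipotent

section OperatorNorm

open scoped Matrix.Norms.L2Operator

variable {ι κ 𝕜 : Type*} [Fintype ι] [Fintype κ] [DecidableEq κ] [RCLike 𝕜]

lemma norm_apply_le_l2_opNorm (A : Matrix ι κ 𝕜) (i : ι) (j : κ) : ‖A i j‖ ≤ ‖A‖ := by
  have hcol := A.l2_opNorm_mulVec (EuclideanSpace.single j 1)
  rw [PiLp.norm_single, norm_one, mul_one] at hcol
  refine le_trans ?_ ((PiLp.norm_apply_le _ i).trans hcol)
  simp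

lemma isBigO_of_isBigO_apply {X E : Type*} [Norm E] {l : Filter X} {F : X → Matrix ι κ 𝕜}
    {g : X → E} (hF : ∀ i j, (fun x => F x i j) =O[l] g) : F =O[l] g := by
  classical
  have hsum : F = fun x => ∑ i, ∑ j, F x i j • single i j (1 : 𝕜) := by
    funext x
    conv_lhs => rw [matrix_eq_sum_single (F x)]
    simp
  rw [hsum]
  refine IsBigO.fun_sum fun i _ => IsBigO.fun_sum fun j _ => ?_
  have hle : (fun x => F x i j • single i j (1 : 𝕜)) =O[l] fun x => F x i j :=
    .of_bound ‖single i j (1 : 𝕜)‖ (.of_forall fun x => by rw [norm_smul, mul_comm])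
  exact hle.trans (hF i j)

/-- The entries of `δ` are, up to sign and order, the singular values of `X`. -/
def HasSingularValues (X : Matrix κ κ ℝ) (δ : κ → ℝ) : Prop :=
  ∃ K ∈ orthogonalGroup κ ℝ, ∃ K' ∈ orthogonalGroup κ ℝ, X = K * diagonal δ * K'

variable {X Y : Matrix κ κ ℝ} {δ : κ → ℝ}

lemma HasSingularValues.l2_opNorm_eq (hX : HasSingularValues X δ) : ‖X‖ = ‖δ‖ := by
  obtain ⟨K, hK, K', hK', rfl⟩ := hX
  rw [CStarRing.norm_mul_mem_unitary _ hK', CStarRing.norm_mem_unitary_mul _ hK,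
    l2_opNorm_diagonal]

lemma HasSingularValues.abs_le_l2_opNorm (hX : HasSingularValues X δ) (s : κ) : |δ s| ≤ ‖X‖ :=
  (norm_le_pi_norm δ s).trans_eq hX.l2_opNorm_eq.symm

lemma HasSingularValues.one_le_l2_opNorm_mul_abs (hX : HasSingularValues X δ) (hY : Y * X = 1)
    (t : κ) : 1 ≤ ‖Y‖ * |δ t| := by
  obtain ⟨K, hK, K', hK', rfl⟩ := hX
  have hinv : K' * Y * K * diagonal δ = 1 := by
    rw [mul_assoc, mul_assoc, mul_eq_one_comm, ← hY]
    simp only [mul_assoc]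
  calc 1 = ‖(K' * Y * K * diagonal δ) t t‖ := by rw [hinv, one_apply_eq, norm_one]
    _ = ‖(K' * Y * K) t t‖ * |δ t| := by rw [mul_diagonal, norm_mul, Real.norm_eq_abs (δ t)]
    _ ≤ ‖K' * Y * K‖ * |δ t| := by gcongr; exact norm_apply_le_l2_opNorm _ t t
    _ = ‖Y‖ * |δ t| := by
      rw [CStarRing.norm_mul_mem_unitary _ hK, CStarRing.norm_mem_unitary_mul _ hK']

lemma HasSingularValues.abs_le_mul_abs (hX : HasSingularValues X δ) (hY : Y * X = 1) (s t : κ) :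
    |δ s| ≤ ‖X‖ * ‖Y‖ * |δ t| :=
  calc |δ s| ≤ ‖X‖ := hX.abs_le_l2_opNorm s
    _ ≤ ‖X‖ * (‖Y‖ * |δ t|) :=
      le_mul_of_one_le_right (norm_nonneg X) (hX.one_le_l2_opNorm_mul_abs hY t)
    _ = ‖X‖ * ‖Y‖ * |δ t| := (mul_assoc _ _ _).symm

lemma exists_abs_le_mul_abs_of_isUnit (hX : IsUnit X) :
    ∃ C : ℝ, ∀ δ, HasSingularValues X δ → ∀ s t, |δ s| ≤ C * |δ t| := by
  obtain ⟨Y, hY⟩ := hX.exists_left_inv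
  exact ⟨‖X‖ * ‖Y‖, fun δ hδ => hδ.abs_le_mul_abs hY⟩

/-- The value `b` separates the largest entry `δ s` of the nonnegative vector `δ` from all the other
entries. When `δ` lists singular values, `b` plays the role of the second one. -/
structure SeparatesTop {ι : Type*} (δ : ι → ℝ) (s : ι) (b : ℝ) : Prop where
  nonneg : ∀ r, 0 ≤ δ r
  bound_nonneg : 0 ≤ b
  le_of_ne : ∀ r, r ≠ s → δ r ≤ b
  le_top : b ≤ δ s

namespace SeparatesTop

variable {ι : Type*} {δ : ι → ℝ} {s : ι} {b : ℝ} (h : SeparatesTop δ s b)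

include h

lemma apply_le_top (r : ι) : δ r ≤ δ s := by
  rcases eq_or_ne r s with rfl | hr
  · exact le_rfl
  · exact (h.le_of_ne r hr).trans h.le_top

lemma mul_le {x y : ι} (hxy : x ≠ y) : δ x * δ y ≤ δ s * b := by
  wlog hy : y ≠ s generalizing x y
  · rw [mul_comm]
    exact this hxy.symm (not_ne_iff.1 hy ▸ hxy)
  exact mul_le_mul (h.apply_le_top x) (h.le_of_ne y hy) (h.nonneg y) (h.nonneg s)

end SeparatesTop

lemma det_mul_diagonal_mul_fin_two {R : Type*} [CommRing R] (A : Matrix (Fin 2) κ R) (δ : κ → R)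
    (B : Matrix κ (Fin 2) R) :
    (A * diagonal δ * B).det =
      ∑ x, ∑ y, δ x * δ y * (A 0 x * A 1 y * (B x 0 * B y 1 - B x 1 * B y 0)) := by
  have hentry (a b : Fin 2) : (A * diagonal δ * B) a b = ∑ x, A a x * δ x * B x b := by
    simp only [Matrix.mul_apply (M := A * diagonal δ), mul_diagonal]
  rw [det_fin_two, hentry, hentry, hentry, hentry, Finset.sum_mul_sum, Finset.sum_mul_sum,
    ← Finset.sum_sub_distrib]
  simp only [← Finset.sum_sub_distrib]
  refine Finset.sum_congr rfl fun x _ => Finset.sum_congr rfl fun y _ => ?_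
  ring

lemma abs_det_mul_diagonal_mul_le (A : Matrix (Fin 2) κ ℝ) (B : Matrix κ (Fin 2) ℝ)
    {s : κ} {b : ℝ} (h : SeparatesTop δ s b) :
    |(A * diagonal δ * B).det| ≤ 2 * Fintype.card κ ^ 2 * (‖A‖ * ‖B‖) ^ 2 * (δ s * b) := by
  have hentry (x y : κ) : |A 0 x * A 1 y * (B x 0 * B y 1 - B x 1 * B y 0)|
      ≤ ‖A‖ * ‖A‖ * (‖B‖ * ‖B‖ + ‖B‖ * ‖B‖) := by
    rw [abs_mul, abs_mul]
    gcongr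
    · exact norm_apply_le_l2_opNorm A 0 x
    · exact norm_apply_le_l2_opNorm A 1 y
    refine (abs_sub _ _).trans ?_
    rw [abs_mul, abs_mul]
    gcongr <;> exact norm_apply_le_l2_opNorm B _ _
  have hterm (x y : κ) : |δ x * δ y * (A 0 x * A 1 y * (B x 0 * B y 1 - B x 1 * B y 0))|
      ≤ δ s * b * (‖A‖ * ‖A‖ * (‖B‖ * ‖B‖ + ‖B‖ * ‖B‖)) := by
    have hδ : 0 ≤ δ s * b := mul_nonneg (h.nonneg s) h.bound_nonneg
    rcases eq_or_ne x y with rfl | hxy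
    · rw [mul_comm (B x 0), sub_self, mul_zero, mul_zero, abs_zero]
      positivity
    · rw [abs_mul, abs_of_nonneg (mul_nonneg (h.nonneg x) (h.nonneg y))]
      exact mul_le_mul (h.mul_le hxy) (hentry x y) (abs_nonneg _) hδ
  rw [det_mul_diagonal_mul_fin_two, ← Fintype.sum_prod_type']
  refine (Finset.abs_sum_le_sum_abs _ _).trans
    ((Finset.sum_le_card_nsmul _ _ _ fun z _ => hterm z.1 z.2).trans_eq ?_)
  rw [Finset.card_univ, Fintype.card_prod, nsmul_eq_mul]
  push_cast
  ring

lemma HasSingularValues.abs_det_mul_mul_le (hX : HasSingularValues X δ) {s : κ} {b : ℝ}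
    (h : SeparatesTop δ s b) (A : Matrix (Fin 2) κ ℝ) (B : Matrix κ (Fin 2) ℝ) :
    |(A * X * B).det| ≤ 2 * Fintype.card κ ^ 2 * (‖A‖ * ‖B‖) ^ 2 * (δ s * b) := by
  obtain ⟨K, hK, K', hK', rfl⟩ := hX
  have : Nonempty κ := ⟨s⟩
  have hA : ‖A * K‖ ≤ ‖A‖ := by
    simpa [CStarRing.norm_of_mem_unitary hK] using l2_opNorm_mul A K
  have hB : ‖K' * B‖ ≤ ‖B‖ := by
    simpa [CStarRing.norm_of_mem_unitary hK'] using l2_opNorm_mul K' B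
  have hδ : 0 ≤ δ s * b := mul_nonneg (h.nonneg s) h.bound_nonneg
  calc |(A * (K * diagonal δ * K') * B).det|
      = |(A * K * diagonal δ * (K' * B)).det| := by simp only [Matrix.mul_assoc]
    _ ≤ 2 * Fintype.card κ ^ 2 * (‖A * K‖ * ‖K' * B‖) ^ 2 * (δ s * b) :=
        abs_det_mul_diagonal_mul_le _ _ h
    _ ≤ 2 * Fintype.card κ ^ 2 * (‖A‖ * ‖B‖) ^ 2 * (δ s * b) := by gcongr

section PolynomialPowers

variable {ι : Type*} [Fintype ι] [DecidableEq ι] {U : Matrix ι ι ℝ}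

lemma exists_abs_hankel_pow_apply_le (U : Matrix ι ι ℝ) (i j : ι) :
    ∃ c, 0 ≤ c ∧ ∀ (n : ℕ) δ s b, HasSingularValues (U ^ n) δ → SeparatesTop δ s b →
      |(U ^ n) i j * (U ^ (n + 2)) i j - (U ^ (n + 1)) i j ^ 2| ≤ c * (δ s * b) := by
  let A : Matrix (Fin 2) ι ℝ := of fun a => (U ^ (a : ℕ)) i
  let B : Matrix ι (Fin 2) ℝ := of fun x b => (U ^ (b : ℕ)) x j
  have hentry (n : ℕ) (a b : Fin 2) : (A * U ^ n * B) a b = (U ^ (a + n + b : ℕ)) i j := by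
    rw [pow_add, pow_add]
    rfl
  refine ⟨2 * Fintype.card ι ^ 2 * (‖A‖ * ‖B‖) ^ 2, by positivity, fun n δ s b hδ h => ?_⟩
  have hdet : (A * U ^ n * B).det
      = (U ^ n) i j * (U ^ (n + 2)) i j - (U ^ (n + 1)) i j ^ 2 := by
    simp only [det_fin_two, hentry, Fin.val_zero, Fin.val_one, zero_add, add_zero]
    ring_nf
  rw [← hdet]
  exact hδ.abs_det_mul_mul_le h A B

variable {Q : Matrix ι ι ℝ[X]}

lemma isBigO_matrix_pow_of_natDegree_le (hQ : ∀ n : ℕ, U ^ n = Q.map (eval (n : ℝ))) {m : ℕ}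
    (hdeg : ∀ i j, (Q i j).natDegree ≤ m) :
    (fun n : ℕ => U ^ n) =O[atTop] fun n => (n : ℝ) ^ m := by
  refine isBigO_of_isBigO_apply fun i j => ?_
  have hdegree : (Q i j).degree ≤ (X ^ m : ℝ[X]).degree := by
    rw [degree_X_pow]
    exact natDegree_le_iff_degree_le.1 (hdeg i j)
  have hpoly := isBigO_atTop_of_degree_le _ _ hdegree
  simpa [hQ, Function.comp_def] using hpoly.comp_tendsto tendsto_natCast_atTop_atTop

lemma isBigO_pow_two_mul_hankel {P : ℝ[X]} {m : ℕ} (hP : P.natDegree = m + 1) :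
    (fun n : ℕ => (n : ℝ) ^ (2 * m)) =O[atTop]
      fun n : ℕ => P.eval (n : ℝ) * P.eval (n + 2 : ℝ) - P.eval (n + 1 : ℝ) ^ 2 := by
  have hdegree : (X ^ (2 * m) : ℝ[X]).degree ≤ (hankelPoly P).degree := by
    rw [degree_X_pow]
    exact two_mul_le_degree_hankelPoly hP
  have hpoly := isBigO_atTop_of_degree_le _ _ hdegree
  simpa [eval_hankelPoly, Function.comp_def] using hpoly.comp_tendsto tendsto_natCast_atTop_atTop

lemma exists_eventually_top_le_sq_mul_of_natDegree_eq (hQ : ∀ n : ℕ, U ^ n = Q.map (eval (n : ℝ)))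
    {m : ℕ} {i j : ι} (hij : (Q i j).natDegree = m + 1)
    (hdeg : ∀ i j, (Q i j).natDegree ≤ m + 1) :
    ∃ C : ℝ, ∀ᶠ n : ℕ in atTop, ∀ δ s b, HasSingularValues (U ^ n) δ → SeparatesTop δ s b →
      δ s ≤ C * n ^ 2 * b := by
  obtain ⟨c, hc, hupper⟩ := exists_abs_hankel_pow_apply_le U i j
  obtain ⟨c₁, hnorm⟩ := (isBigO_matrix_pow_of_natDegree_le hQ hdeg).bound
  obtain ⟨c₂, hc₂, hlower⟩ := (isBigO_pow_two_mul_hankel hij).exists_pos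
  refine ⟨c₂ * c * c₁ ^ 2, ?_⟩
  filter_upwards [hnorm, hlower.bound, eventually_gt_atTop 0] with n hnorm hlower hn δ s b hδ h
  have hb := h.bound_nonneg
  have htop : δ s ≤ c₁ * n ^ (m + 1) := by
    simpa using (le_abs_self _).trans ((hδ.abs_le_l2_opNorm s).trans hnorm)
  have hhankel : (n : ℝ) ^ (2 * m) ≤ c₂ * (c * (δ s * b)) := by
    have hn_upper := hupper n δ s b hδ h
    simp only [hQ, map_apply, Nat.cast_add, Nat.cast_one, Nat.cast_ofNat] at hn_upper
    calc (n : ℝ) ^ (2 * m) = ‖(n : ℝ) ^ (2 * m)‖ := by simp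
      _ ≤ c₂ * _ := hlower
      _ ≤ c₂ * (c * (δ s * b)) := by gcongr; exact hn_upper
  have hpow : (0 : ℝ) < n ^ (2 * m) := by positivity
  refine le_of_mul_le_mul_left ?_ hpow
  calc n ^ (2 * m) * δ s ≤ c₂ * (c * (δ s * b)) * δ s := by gcongr; exact h.nonneg s
    _ = c₂ * c * b * δ s ^ 2 := by ring
    _ ≤ c₂ * c * b * (c₁ * n ^ (m + 1)) ^ 2 := by gcongr; exact h.nonneg s
    _ = n ^ (2 * m) * (c₂ * c * c₁ ^ 2 * n ^ 2 * b) := by ring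

lemma SeparatesTop.top_le_of_hasSingularValues_one [Nontrivial ι] {δ : ι → ℝ} {s : ι} {b : ℝ}
    (h : SeparatesTop δ s b) (hδ : HasSingularValues 1 δ) : δ s ≤ b := by
  obtain ⟨t, hts⟩ := exists_ne s
  have hle := hδ.abs_le_mul_abs (one_mul 1) s t
  rw [CStarRing.norm_one, one_mul, one_mul, abs_of_nonneg (h.nonneg s),
    abs_of_nonneg (h.nonneg t)] at hle
  exact hle.trans (h.le_of_ne t hts)

lemma exists_eventually_top_le_sq_mul [Nontrivial ι] (hQ : ∀ n : ℕ, U ^ n = Q.map (eval (n : ℝ))) :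
    ∃ C : ℝ, ∀ᶠ n : ℕ in atTop, ∀ δ s b, HasSingularValues (U ^ n) δ → SeparatesTop δ s b →
      δ s ≤ C * n ^ 2 * b := by
  obtain ⟨⟨i, j⟩, hmax⟩ := Finite.exists_max fun x : ι × ι => (Q x.1 x.2).natDegree
  rcases hij : (Q i j).natDegree with _ | m
  · have hconst (n : ℕ) : U ^ n = 1 := by
      have hdeg (k l) : (Q k l).natDegree = 0 := Nat.le_zero.1 ((hmax (k, l)).trans_eq hij)
      rw [← pow_zero U, hQ, hQ]
      ext k l
      rw [map_apply, map_apply, eq_C_of_natDegree_eq_zero (hdeg k l), eval_C, eval_C]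
    refine ⟨1, ?_⟩
    filter_upwards [eventually_ge_atTop 1] with n hn δ s b hδ h
    have hone : (1 : ℝ) ≤ n ^ 2 := one_le_pow₀ (by exact_mod_cast hn)
    rw [one_mul]
    exact (h.top_le_of_hasSingularValues_one (hconst n ▸ hδ)).trans
      (le_mul_of_one_le_left h.bound_nonneg hone)
  · exact exists_eventually_top_le_sq_mul_of_natDegree_eq hQ hij
      fun k l => (hmax (k, l)).trans_eq hij

end PolynomialPowers

end OperatorNorm

section Compound

variable {ι R S : Type*} [LinearOrder ι] [CommRing R] [CommRing S]

/-- The `p`-th compound matrix of `A`: the matrix of its `p × p` minors, which represents `⋀ᵖ A`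
in the standard basis. -/
def compound (p : ℕ) (A : Matrix ι ι R) :
    Matrix (Set.powersetCard ι p) (Set.powersetCard ι p) R :=
  of fun s t => (A.submatrix (Set.powersetCard.ofFinEmbEquiv.symm s)
    (Set.powersetCard.ofFinEmbEquiv.symm t)).det

lemma compound_transpose (p : ℕ) (A : Matrix ι ι R) : compound p Aᵀ = (compound p A)ᵀ := by
  ext s t
  exact det_transpose _

lemma compound_map (p : ℕ) (A : Matrix ι ι R) (f : R →+* S) :
    compound p (A.map f) = (compound p A).map f := by
  ext s t
  exact (f.map_det _).symm

lemma compound_diagonal (p : ℕ) (α : ι → R) :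
    compound p (diagonal α) =
      diagonal fun s : Set.powersetCard ι p => ∏ i ∈ (s : Finset ι), α i := by
  ext s t
  rcases eq_or_ne s t with rfl | hst
  · rw [diagonal_apply_eq, compound, of_apply,
      submatrix_diagonal _ _ (Set.powersetCard.ofFinEmbEquiv.symm s).injective, det_diagonal]
    conv_rhs => rw [← Finset.map_orderEmbOfFin_univ s.1 s.2, Finset.prod_map]
    rfl
  · obtain ⟨i, his, hit⟩ := (Set.powersetCard.exists_mem_notMem_iff_ne s t).1 hst
    obtain ⟨a, rfl⟩ := (Set.powersetCard.mem_range_ofFinEmbEquiv_symm_iff_mem s i).2 his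
    rw [diagonal_apply_ne _ hst, compound, of_apply]
    refine det_eq_zero_of_row_eq_zero a fun b => diagonal_apply_ne _ ?_
    intro hab
    exact hit (hab ▸ (Set.powersetCard.mem_range_ofFinEmbEquiv_symm_iff_mem t _).1 ⟨b, rfl⟩)

variable [Fintype ι]

lemma compound_eq_toMatrix (p : ℕ) (A : Matrix ι ι R) :
    compound p A = LinearMap.toMatrix ((Pi.basisFun R ι).exteriorPower p)
      ((Pi.basisFun R ι).exteriorPower p) (exteriorPower.map p (toLin' A)) := by
  ext s t
  rw [LinearMap.toMatrix_apply, exteriorPower.basis_repr_apply, exteriorPower.basis_apply,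
    exteriorPower.map_apply_ιMulti_family, exteriorPower.ιMulti_family,
    exteriorPower.ιMultiDual_apply_ιMulti, compound, of_apply, ← det_transpose]
  congr 1
  ext i j
  simp

omit [Fintype ι] in
lemma compound_one [Finite ι] (p : ℕ) : compound p (1 : Matrix ι ι R) = 1 := by
  have := Fintype.ofFinite ι
  rw [compound_eq_toMatrix, toLin'_one, exteriorPower.map_id, LinearMap.toMatrix_id]

lemma compound_mul (p : ℕ) (A B : Matrix ι ι R) :
    compound p (A * B) = compound p A * compound p B := by
  simp only [compound_eq_toMatrix, toLin'_mul]
  rw [exteriorPower.map_comp, LinearMap.toMatrix_comp _ ((Pi.basisFun R ι).exteriorPower p)]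

lemma compound_pow (p : ℕ) (A : Matrix ι ι R) (n : ℕ) :
    compound p (A ^ n) = compound p A ^ n := by
  induction n with
  | zero => rw [pow_zero, pow_zero, compound_one]
  | succ n ih => rw [pow_succ, pow_succ, compound_mul, ih]

lemma compound_mem_orthogonalGroup (p : ℕ) {K : Matrix ι ι ℝ} (hK : K ∈ orthogonalGroup ι ℝ) :
    compound p K ∈ orthogonalGroup (Set.powersetCard ι p) ℝ := by
  rw [mem_orthogonalGroup_iff] at hK ⊢
  rw [← compound_transpose, ← compound_mul, hK, compound_one]

lemma HasSingularValues.compound {X : Matrix ι ι ℝ} {α : ι → ℝ} (hX : HasSingularValues X α)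
    (p : ℕ) : HasSingularValues (compound p X)
      fun s : Set.powersetCard ι p => ∏ i ∈ (s : Finset ι), α i := by
  obtain ⟨K, hK, K', hK', rfl⟩ := hX
  refine ⟨_, compound_mem_orthogonalGroup p hK, _, compound_mem_orthogonalGroup p hK', ?_⟩
  rw [compound_mul, compound_mul, compound_diagonal]

end Compound

section TopProduct

open Finset

lemma prod_mul_le_prod_Iic_mul {ι : Type*} [LinearOrder ι] [LocallyFiniteOrderBot ι]
    {α : ι → ℝ} (hnonneg : ∀ i, 0 ≤ α i) (hα : Antitone α) {i j : ι} (hij : i ⋖ j) {s : Finset ι}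
    (hcard : #s = #(Iic i)) (hne : s ≠ Iic i) :
    (∏ x ∈ s, α x) * α i ≤ (∏ x ∈ Iic i, α x) * α j := by
  obtain ⟨k, hk⟩ : ∃ k, #(s \ Iic i) = k + 1 := by
    refine Nat.exists_eq_add_one.2 (card_pos.2 (sdiff_nonempty.2 fun hsub => hne ?_))
    exact eq_of_subset_of_card_le hsub hcard.ge
  have hk' : #(Iic i \ s) = k + 1 := by rw [← card_sdiff_comm hcard, hk]
  have hout : ∏ x ∈ s \ Iic i, α x ≤ α j ^ (k + 1) := by
    rw [← hk, ← prod_const]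
    refine prod_le_prod (fun x _ => hnonneg x) fun x hx => hα (hij.ge_of_gt ?_)
    simpa using (mem_sdiff.1 hx).2
  have hin : α i ^ (k + 1) ≤ ∏ x ∈ Iic i \ s, α x := by
    rw [← hk', ← prod_const]
    exact prod_le_prod (fun x _ => hnonneg i) fun x hx => hα (mem_Iic.1 (mem_sdiff.1 hx).1)
  have hcommon : 0 ≤ ∏ x ∈ s ∩ Iic i, α x := prod_nonneg fun x _ => hnonneg x
  calc (∏ x ∈ s, α x) * α i
      = (∏ x ∈ s ∩ Iic i, α x) * (∏ x ∈ s \ Iic i, α x) * α i := by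
        rw [prod_inter_mul_prod_sdiff]
    _ ≤ (∏ x ∈ s ∩ Iic i, α x) * α j ^ (k + 1) * α i := by gcongr; exact hnonneg i
    _ = (∏ x ∈ s ∩ Iic i, α x) * (α j ^ k * α i) * α j := by ring
    _ ≤ (∏ x ∈ s ∩ Iic i, α x) * (α i ^ k * α i) * α j := by
        gcongr
        exacts [hnonneg j, hnonneg i, hnonneg j, hα hij.le]
    _ ≤ (∏ x ∈ s ∩ Iic i, α x) * (∏ x ∈ Iic i \ s, α x) * α j := by
        rw [← pow_succ]
        gcongr
        exact hnonneg j
    _ = (∏ x ∈ Iic i, α x) * α j := by rw [inter_comm, prod_inter_mul_prod_sdiff]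

lemma separatesTop_prod {ι : Type*} [LinearOrder ι] [LocallyFiniteOrderBot ι] {α : ι → ℝ}
    (hpos : ∀ i, 0 < α i) (hα : Antitone α) {i j : ι} (hij : i ⋖ j) :
    SeparatesTop (fun s : Set.powersetCard ι #(Iic i) => ∏ x ∈ (s : Finset ι), α x)
      ⟨Iic i, rfl⟩ ((∏ x ∈ Iic i, α x) * α j / α i) where
  nonneg s := prod_nonneg fun x _ => (hpos x).le
  bound_nonneg := by
    have htop : 0 ≤ ∏ x ∈ Iic i, α x := prod_nonneg fun x _ => (hpos x).le
    have hi := hpos i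
    have hj := hpos j
    positivity
  le_of_ne s hs := by
    rw [le_div_iff₀ (hpos i)]
    exact prod_mul_le_prod_Iic_mul (fun x => (hpos x).le) hα hij s.2 (Subtype.coe_ne_coe.2 hs)
  le_top := by
    rw [div_le_iff₀ (hpos i)]
    exact mul_le_mul_of_nonneg_left (hα hij.le) (prod_nonneg fun x _ => (hpos x).le)

end TopProduct

section ConsecutiveRatios

lemma exists_eventually_div_le_sq_of_covBy {ι : Type*} [Fintype ι] [LinearOrder ι]
    [LocallyFiniteOrderBot ι] {u : Matrix ι ι ℝ} {d : ℕ} (hu : (u - 1) ^ d = 0)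
    {i j : ι} (hij : i ⋖ j) :
    ∃ C : ℝ, ∀ᶠ n : ℕ in atTop, ∀ α : ι → ℝ, (∀ x, 0 < α x) → Antitone α →
      HasSingularValues (u ^ n) α → α i / α j ≤ C * n ^ 2 := by
  obtain ⟨Q, hQ⟩ := exists_pow_eq_map_eval hu
  have hcompound (n : ℕ) : compound #(Finset.Iic i) u ^ n
      = (compound #(Finset.Iic i) Q).map (eval (n : ℝ)) := by
    rw [← compound_pow, hQ]
    exact compound_map _ Q (evalRingHom (n : ℝ))
  have hlt : #(Finset.Iic i) < Nat.card ι := by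
    rw [Nat.card_eq_fintype_card]
    exact Finset.card_lt_univ_of_notMem (x := j) (by simpa using hij.lt)
  have : Nontrivial (Set.powersetCard ι #(Finset.Iic i)) :=
    Set.powersetCard.nontrivial' (Finset.card_pos.2 Finset.nonempty_Iic) hlt
  obtain ⟨C, hC⟩ := exists_eventually_top_le_sq_mul hcompound
  refine ⟨C, hC.mono fun n hn α hpos hα hsing => ?_⟩
  have htop : 0 < ∏ x ∈ Finset.Iic i, α x := Finset.prod_pos fun x _ => hpos x
  have hle := hn _ _ _ (compound_pow #(Finset.Iic i) u n ▸ hsing.compound _)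
    (separatesTop_prod hpos hα hij)
  have hi := hpos i
  have hj := hpos j
  rw [div_le_iff₀ hj]
  refine le_of_mul_le_mul_left ?_ htop
  rw [← mul_div_assoc, le_div_iff₀ hi] at hle
  linarith

lemma exists_eventually_forall_div_le_sq {ι : Type*} [Fintype ι] [LinearOrder ι]
    [LocallyFiniteOrderBot ι] {u : Matrix ι ι ℝ} {d : ℕ} (hu : (u - 1) ^ d = 0) :
    ∃ C : ℝ, ∀ᶠ n : ℕ in atTop, ∀ α : ι → ℝ, (∀ x, 0 < α x) → Antitone α →
      HasSingularValues (u ^ n) α → ∀ i j, i ⋖ j → α i / α j ≤ C * n ^ 2 := by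
  choose C hC using fun x : {x : ι × ι // x.1 ⋖ x.2} => exists_eventually_div_le_sq_of_covBy hu x.2
  obtain ⟨M, hM⟩ := Finite.exists_le C
  refine ⟨M, (eventually_all.2 hC).mono fun n hn α hpos hα hsing i j hij => ?_⟩
  exact (hn ⟨(i, j), hij⟩ α hpos hα hsing).trans (by gcongr; exact hM _)

lemma exists_forall_lt_div_le {ι : Type*} [Fintype ι] [DecidableEq ι] {u : Matrix ι ι ℝ}
    (hu : IsUnit u) (N : ℕ) :
    ∃ C : ℝ, ∀ n < N, ∀ α : ι → ℝ, (∀ x, 0 < α x) → HasSingularValues (u ^ n) α →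
      ∀ i j, α i / α j ≤ C := by
  choose C hC using fun n : Fin N => exists_abs_le_mul_abs_of_isUnit (hu.pow n)
  obtain ⟨M, hM⟩ := Finite.exists_le C
  refine ⟨M, fun n hn α hpos hsing i j => ?_⟩
  have hle := hC ⟨n, hn⟩ α hsing i j
  rw [abs_of_pos (hpos i), abs_of_pos (hpos j), ← div_le_iff₀ (hpos j)] at hle
  exact hle.trans (hM _)

end ConsecutiveRatios

lemma IsSVD.hasSingularValues {d : ℕ} {g k k' : Matrix (Fin d) (Fin d) ℝ} {α : Fin d → ℝ}
    (h : IsSVD g k α k') : HasSingularValues g α :=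
  ⟨k, (mem_orthogonalGroup_iff _ _).2 h.1, k', (mem_orthogonalGroup_iff _ _).2 h.2.1, h.2.2.2.2⟩

/-- For a unipotent `u ∈ GL(d,ℝ)` there is `C ≥ 1` such that each ratio of consecutive
singular values of `uⁿ` is at most `C · n²`. -/
theorem stmt3 (d : ℕ) (hd : 2 ≤ d) (u : Matrix (Fin d) (Fin d) ℝ)
    (hu : (u - 1) ^ d = 0) :
    ∃ C : ℝ, 1 ≤ C ∧ ∀ n : ℕ, 1 ≤ n →
      ∀ (k : Matrix (Fin d) (Fin d) ℝ) (α : Fin d → ℝ) (k' : Matrix (Fin d) (Fin d) ℝ),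
        IsSVD (u ^ n) k α k' →
        ∀ i : Fin d, ∀ h : (i : ℕ) + 1 < d,
          α i / α ⟨(i : ℕ) + 1, h⟩ ≤ C * (n : ℝ) ^ 2 := by
  obtain ⟨C₀, hlarge⟩ := exists_eventually_forall_div_le_sq hu
  obtain ⟨N, hN⟩ := eventually_atTop.1 hlarge
  obtain ⟨C₁, hsmall⟩ := exists_forall_lt_div_le (isUnit_of_sub_one_pow_eq_zero hu) N
  refine ⟨max 1 (max C₀ C₁), le_max_left _ _, fun n hn k α k' hsvd i hi => ?_⟩
  have hcov : i ⋖ ⟨i + 1, hi⟩ :=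
    ⟨Nat.lt_succ_self _, fun x hx hx' => by simp only [Fin.lt_def] at hx hx'; omega⟩
  have hsing := hsvd.hasSingularValues
  obtain ⟨-, -, hpos, hanti, -⟩ := hsvd
  rcases lt_or_ge n N with hlt | hge
  · have hn_sq : (1 : ℝ) ≤ (n : ℝ) ^ 2 := one_le_pow₀ (by exact_mod_cast hn)
    calc α i / α ⟨i + 1, hi⟩ ≤ C₁ := hsmall n hlt α hpos hsing _ _
      _ ≤ max 1 (max C₀ C₁) := by simp
      _ ≤ max 1 (max C₀ C₁) * (n : ℝ) ^ 2 := le_mul_of_one_le_right (by positivity) hn_sq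
  · calc α i / α ⟨i + 1, hi⟩ ≤ C₀ * (n : ℝ) ^ 2 := hN n hge α hpos hanti hsing _ _ hcov
      _ ≤ max 1 (max C₀ C₁) * (n : ℝ) ^ 2 := by gcongr; simp
end
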